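/- Let G^ν = {z ∈ 𝔹₂ : r_ν(z) < 0}, where the r_ν are C² functions on 𝔹̄₂ of the form r_ν(z) = Re(z₂) + |z₁|² + R_ν(z) with |R_ν(z)| ≤ C(|z₂|·|z| + |z|³) for a constant C independent of ν. Let J and J_ν be almost complex structures on a neighborhood of 𝔹̄₂ such that each J_ν(z) and J(z) maps each factor of the splitting ℂ² = ℂ × ℂ into itself, J(0) = J_st, ‖J(z) − J_st‖ ≤ C|z|, and ‖J_ν − J‖_{C²(𝔹̄₂)} → 0. For δ > 0 set Q(0,δ) = {z ∈ ℂ² : |z₁| < √δ, |z₂| < δ}. Then there exist constants C₀ > 0, δ₀ > 0, r₀ > 0 and an index ν₀ such that for every 0 < δ < δ₀, every ν ≥ ν₀ and every J_ν-holomorphic disc g : Δ → G^ν with g(0) ∈ Q(0,δ), one has g({ζ : |ζ| < r₀}) ⊆ Q(0, C₀δ). -/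

import Mathlib

open Metric Set Filter Topology Asymptotics

noncomputable section

/-- The standard complex structure `J_st` (multiplication by `i`) on a complex
normed space, viewed as a real-linear endomorphism. -/
def Jst (E : Type*) [NormedAddCommGroup E] [NormedSpace ℂ E] : E →L[ℝ] E :=
  ContinuousLinearMap.restrictScalars ℝ (Complex.I • ContinuousLinearMap.id ℂ E)

variable {E F : Type*} [NormedAddCommGroup E] [NormedSpace ℂ E]
  [NormedAddCommGroup F] [NormedSpace ℂ F]

/-- `J` is an almost complex structure on the set `Ω`: a smooth field of real-linear
endomorphisms with `J x ∘ J x = -id`. -/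
structure IsACS (Ω : Set E) (J : E → E →L[ℝ] E) : Prop where
  smooth : ContDiffOn ℝ (⊤ : ℕ∞) J Ω
  sq : ∀ x ∈ Ω, (J x).comp (J x) = -(ContinuousLinearMap.id ℝ E)

/-- `f` is `(J', J)`-holomorphic on `s`: `Df(x) ∘ J'(x) = J(f x) ∘ Df(x)`. -/
def IsHolomorphicMapOn (J' : E → E →L[ℝ] E) (J : F → F →L[ℝ] F) (f : E → F)
    (s : Set E) : Prop :=
  ∀ x ∈ s, DifferentiableAt ℝ f x ∧
    (fderiv ℝ f x).comp (J' x) = (J (f x)).comp (fderiv ℝ f x)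

/-- The Levi form `L^J(r)(x)(X) = -d(J⋆dr)(x)(X, J x X)` where `J⋆dr` is the 1-form
`X ↦ dr(x)(J x X)` and `dω(x)(X,Y) = (Dω(x)X)(Y) - (Dω(x)Y)(X)`. -/
def leviForm (J : E → E →L[ℝ] E) (r : E → ℝ) (x : E) (X : E) : ℝ :=
  -((fderiv ℝ (fun y => (fderiv ℝ r y).comp (J y)) x X) (J x X)
    - (fderiv ℝ (fun y => (fderiv ℝ r y).comp (J y)) x (J x X)) X)

/-- `r` is strictly `J`-plurisubharmonic on `s`. -/
def StrictPSHOn (J : E → E →L[ℝ] E) (r : E → ℝ) (s : Set E) : Prop :=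
  ∀ x ∈ s, ∀ X : E, X ≠ 0 → 0 < leviForm J r x X

/-- `r` is `J`-plurisubharmonic on `s` (nonnegative Levi form). -/
def PSHOn (J : E → E →L[ℝ] E) (r : E → ℝ) (s : Set E) : Prop :=
  ∀ x ∈ s, ∀ X : E, 0 ≤ leviForm J r x X

/-- `C⁰` norm of `g` on `K`. -/
def c0Norm {G : Type*} [NormedAddCommGroup G] (g : E → G) (K : Set E) : ℝ :=
  ⨆ x : K, ‖g (x : E)‖

/-- `C¹` norm of `g` on `K`. -/
def c1Norm {G : Type*} [NormedAddCommGroup G] [NormedSpace ℝ G] (g : E → G) (K : Set E) : ℝ :=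
  ⨆ x : K, max ‖g (x : E)‖ ‖fderiv ℝ g (x : E)‖

/-- `C¹` distance between `g` and `h` on `K`. -/
def c1Dist {G : Type*} [NormedAddCommGroup G] [NormedSpace ℝ G] (g h : E → G) (K : Set E) : ℝ :=
  ⨆ x : K, max ‖g (x : E) - h (x : E)‖ ‖fderiv ℝ g (x : E) - fderiv ℝ h (x : E)‖

/-- `C²` distance between `g` and `h` on `K`. -/
def c2Dist {G : Type*} [NormedAddCommGroup G] [NormedSpace ℝ G] (g h : E → G) (K : Set E) : ℝ :=
  ⨆ x : K, max ‖g (x : E) - h (x : E)‖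
    (max ‖fderiv ℝ g (x : E) - fderiv ℝ h (x : E)‖
      ‖fderiv ℝ (fderiv ℝ g) (x : E) - fderiv ℝ (fderiv ℝ h) (x : E)‖)

/-- A `J`-holomorphic disc in `D`: a map from the unit disc `Δ ⊂ ℂ` to `D` satisfying
`Df(ζ) ∘ J_st = J(f ζ) ∘ Df(ζ)`. -/
def IsJDisc (J : F → F →L[ℝ] F) (D : Set F) (f : ℂ → F) : Prop :=
  MapsTo f (ball (0 : ℂ) 1) D ∧
  ∀ ζ ∈ ball (0 : ℂ) 1, DifferentiableAt ℝ f ζ ∧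
    (fderiv ℝ f ζ).comp (Jst ℂ) = (J (f ζ)).comp (fderiv ℝ f ζ)

/-- The Kobayashi–Royden infinitesimal pseudometric of `(D, J)`. -/
def kobayashiMetric (J : F → F →L[ℝ] F) (D : Set F) (p : F) (v : F) : ℝ :=
  sInf {α : ℝ | 0 < α ∧ ∃ f : ℂ → F, IsJDisc J D f ∧ f 0 = p ∧
    fderiv ℝ f 0 1 = α⁻¹ • v}

/-- The integrated Kobayashi pseudodistance of `(D, J)`. -/
def kobayashiDist (J : F → F →L[ℝ] F) (D : Set F) (p q : F) : ℝ :=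
  sInf {d : ℝ | ∃ γ : ℝ → F, ContDiffOn ℝ 1 γ (Icc 0 1) ∧ MapsTo γ (Icc 0 1) D ∧
    γ 0 = p ∧ γ 1 = q ∧ d = ∫ t in (0:ℝ)..1, kobayashiMetric J D (γ t) (deriv γ t)}

/-- `f` is a smooth diffeomorphism from `s` onto `t` with inverse `g`. -/
def IsDiffeoOn (f : E → F) (g : F → E) (s : Set E) (t : Set F) : Prop :=
  ContDiffOn ℝ (⊤ : ℕ∞) f s ∧ ContDiffOn ℝ (⊤ : ℕ∞) g t ∧ MapsTo f s t ∧ MapsTo g t s ∧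
  (∀ x ∈ s, g (f x) = x) ∧ (∀ y ∈ t, f (g y) = y)

/-- The Laplacian of a real function on `ℂ ≅ ℝ²`. -/
def lapR (g : ℂ → ℝ) (ζ : ℂ) : ℝ :=
  fderiv ℝ (fun w => fderiv ℝ g w 1) ζ 1
    + fderiv ℝ (fun w => fderiv ℝ g w Complex.I) ζ Complex.I

/-- The Wirtinger derivative `∂g/∂ζ`. -/
def wirtingerD (g : ℂ → ℂ) (ζ : ℂ) : ℂ :=
  (fderiv ℝ g ζ 1 - Complex.I * fderiv ℝ g ζ Complex.I) / 2

/-- The Wirtinger derivative `∂g/∂ζ̄`. -/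
def wirtingerDbar (g : ℂ → ℂ) (ζ : ℂ) : ℂ :=
  (fderiv ℝ g ζ 1 + Complex.I * fderiv ℝ g ζ Complex.I) / 2

/-- The coordinates of a point of `ℂ²`. -/
def coord2 (z : ℂ × ℂ) : Fin 2 → ℂ := ![z.1, z.2]

abbrev E2 := EuclideanSpace ℂ (Fin 2)

/-!
Since `J_ν` preserves the splitting, each coordinate of a `J_ν`-holomorphic disc satisfies
`‖Df‖² ≤ K det Df` pointwise, with `K` uniform once `J_ν` is close to `J`. Such maps have locally
finite Dirichlet energy, although differentiability alone does not give `Df ∈ L²`: a Baire category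
argument provides a Lipschitz bound near some point of the set where this fails. If `im f` is
bounded, Caccioppoli's inequality bounds the energy, and the Courant–Lebesgue lemma with the maximum
principle turns this into a modulus of continuity depending only on `K` and the bound on `im f`.

Hence a disc centred near `0` stays near `0` on a fixed smaller disc. There the shape of the domain
forces `|z₁|² ≤ 2|z₂|` and keeps `-z₂` in the slit plane. The imaginary part of `log (-g₂)` is
bounded by `π`, so its oscillation on a fixed disc is at most `1`, that is, `|g₂(ζ)| ≤ 3 |g₂(0)|`.
-/

section

open MeasureTheory Complex ComplexConjugate
open scoped ContDiff

theorem integrable_of_memLp_two_of_hasCompactSupport {X W : Type*} [TopologicalSpace X]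
    [MeasurableSpace X] [OpensMeasurableSpace X] {μ : Measure X} [IsFiniteMeasureOnCompacts μ]
    [NormedAddCommGroup W] {u : X → W} (hc : HasCompactSupport u) (hu : MemLp u 2 μ) :
    Integrable u μ := by
  have : IsFiniteMeasure (μ.restrict (tsupport u)) := ⟨by simpa using hc.isCompact.measure_lt_top⟩
  exact (integrableOn_iff_integrable_of_support_subset (subset_tsupport _)).1
    ((hu.restrict (tsupport u)).integrable (by norm_num))

theorem differentiable_cutoff_mul {V : Type*} [NormedAddCommGroup V] [NormedSpace ℝ V]
    {ψ u : V → ℝ} {S : Set V} (hS : IsOpen S) (hψ : Differentiable ℝ ψ) (hψS : tsupport ψ ⊆ S)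
    (hu : DifferentiableOn ℝ u S) :
    Differentiable ℝ fun z => ψ z * u z := by
  intro z
  by_cases hz : z ∈ tsupport ψ
  · exact (hψ z).mul (hu.differentiableAt (hS.mem_nhds (hψS hz)))
  · have hev : (fun z => ψ z * u z) =ᶠ[𝓝 z] fun _ => 0 := by
      filter_upwards [notMem_tsupport_iff_eventuallyEq.1 hz] with w hw
      simp [hw]
    exact hev.differentiableAt_iff.2 (differentiableAt_const 0)

section HaarMeasure

variable {V : Type*} [NormedAddCommGroup V] [NormedSpace ℝ V] [FiniteDimensional ℝ V]
  [MeasurableSpace V] [BorelSpace V] {μ : Measure V} [μ.IsAddHaarMeasure]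

theorem continuous_integral_mul_sub {p q : V → ℝ} (hp : MemLp p 2 μ) (hq : MemLp q 2 μ) :
    Continuous fun s => ∫ x, p x * q (x - s) ∂μ := by
  let τ : V → C(V, V) := fun s => ⟨fun x => x - s, by fun_prop⟩
  have hτ : Continuous τ :=
    ContinuousMap.continuous_of_continuous_uncurry _ (continuous_snd.sub continuous_fst)
  have hμτ : ∀ s, MeasurePreserving (τ s) μ μ := fun s => measurePreserving_sub_right μ s
  have hqτ : Continuous fun s => Lp.compMeasurePreserving (τ s) (hμτ s) (hq.toLp q) :=
    continuous_const.compMeasurePreservingLp hτ hμτ (by norm_num)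
  refine (hqτ.inner (𝕜 := ℝ) (continuous_const (y := hp.toLp p))).congr fun s => ?_
  rw [L2.inner_def]
  refine integral_congr_ae ?_
  filter_upwards [hp.coeFn_toLp, Lp.coeFn_compMeasurePreserving (hq.toLp q) (hμτ s),
    (hμτ s).quasiMeasurePreserving.ae_eq_comp hq.coeFn_toLp] with x hpx hqx hqτx
  rw [hpx, hqx, hqτx]
  simp [τ]

theorem integral_fderiv_mul_eq_neg_integral_mul_fderiv {h u : V → ℝ} (hh : Differentiable ℝ h)
    (hch : HasCompactSupport h) (hh1 : Integrable (fderiv ℝ h) μ) (hu : ContDiff ℝ 1 u) (a : V) :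
    ∫ z, fderiv ℝ h z a * u z ∂μ = -∫ z, h z * fderiv ℝ u z a ∂μ := by
  have hsupp : HasCompactSupport fun z => fderiv ℝ h z a :=
    (hch.fderiv (𝕜 := ℝ)).comp_left (g := fun L : V →L[ℝ] ℝ => L a) (by simp)
  have hha : Integrable (fun z => fderiv ℝ h z a) μ :=
    (ContinuousLinearMap.apply ℝ ℝ a).integrable_comp hh1
  have hhau : Integrable (fun z => fderiv ℝ h z a * u z) μ :=
    (integrableOn_iff_integrable_of_support_subset
      ((Function.support_mul_subset_left _ _).trans (subset_tsupport _))).1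
      (hha.integrableOn.mul_continuousOn hu.continuous.continuousOn hsupp.isCompact)
  have hua : Continuous fun z => fderiv ℝ u z a :=
    (hu.continuous_fderiv (by simp)).clm_apply continuous_const
  rw [integral_mul_fderiv_eq_neg_fderiv_mul_of_integrable (μ := μ) (f := h) (g := u) (v := a)
    hhau ((hh.continuous.mul hua).integrable_of_hasCompactSupport hch.mul_right)
    ((hh.continuous.mul hu.continuous).integrable_of_hasCompactSupport hch.mul_right)
    (fun z _ => hh z) (fun z _ => hu.differentiable (by simp) z), neg_neg]

theorem integral_fderiv_mul_fderiv_comm_of_contDiff {h w : V → ℝ} (hh : Differentiable ℝ h)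
    (hch : HasCompactSupport h) (hh1 : Integrable (fderiv ℝ h) μ) (hw : ContDiff ℝ 2 w)
    (a b : V) :
    ∫ z, fderiv ℝ h z a * fderiv ℝ w z b ∂μ = ∫ z, fderiv ℝ h z b * fderiv ℝ w z a ∂μ := by
  have hw' : ContDiff ℝ 1 (fderiv ℝ w) := hw.fderiv_right (by norm_num)
  have hfderiv : ∀ z a b, fderiv ℝ (fun z => fderiv ℝ w z b) z a = fderiv ℝ (fderiv ℝ w) z a b := by
    intro z a b
    rw [fderiv_clm_apply (hw'.differentiable (by simp) z) (by fun_prop)]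
    simp
  have hsymm : ∀ z, fderiv ℝ (fderiv ℝ w) z a b = fderiv ℝ (fderiv ℝ w) z b a := fun z =>
    (hw.contDiffAt.isSymmSndFDerivAt (by simp)).eq a b
  rw [integral_fderiv_mul_eq_neg_integral_mul_fderiv hh hch hh1 (hw'.clm_apply contDiff_const),
    integral_fderiv_mul_eq_neg_integral_mul_fderiv hh hch hh1 (hw'.clm_apply contDiff_const)]
  simp_rw [hfderiv, hsymm]

theorem fderiv_convolution_lsmul_apply {η v : V → ℝ} (hη : ContDiff ℝ 1 η)
    (hcη : HasCompactSupport η) (hv : Differentiable ℝ v) (c : V)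
    (hvc : Integrable (fun z => fderiv ℝ v z c) μ) (x : V) :
    fderiv ℝ (convolution η v (ContinuousLinearMap.lsmul ℝ ℝ) μ) x c =
      ∫ s, η s * fderiv ℝ v (x - s) c ∂μ := by
  have hvx : Differentiable ℝ fun s => v (x - s) := by fun_prop
  have hfderiv : ∀ s, fderiv ℝ (fun s => v (x - s)) s c = -fderiv ℝ v (x - s) c := by
    intro s
    have hvs : HasFDerivAt (fun s => v (x - s)) _ s :=
      (hv (x - s)).hasFDerivAt.comp s ((hasFDerivAt_id s).const_sub x)
    rw [hvs.fderiv]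
    simp
  have hleft : fderiv ℝ (convolution η v (ContinuousLinearMap.lsmul ℝ ℝ) μ) x c =
      ∫ s, fderiv ℝ η s c * v (x - s) ∂μ := by
    have hconv := (hcη.fderiv (𝕜 := ℝ)).convolutionExists_left
      ((ContinuousLinearMap.lsmul ℝ ℝ : ℝ →L[ℝ] ℝ →L[ℝ] ℝ).precompL V)
      (hη.continuous_fderiv (by simp)) hv.continuous.locallyIntegrable (μ := μ) x
    rw [(hcη.hasFDerivAt_convolution_left _ hη hv.continuous.locallyIntegrable x).fderiv,
      convolution_def, ContinuousLinearMap.integral_apply hconv]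
    rfl
  have hcηc : HasCompactSupport fun z => fderiv ℝ η z c :=
    (hcη.fderiv (𝕜 := ℝ)).comp_left (g := fun L : V →L[ℝ] ℝ => L c) (by simp)
  have hint : Integrable (fun s => η s * fderiv ℝ (fun s => v (x - s)) s c) μ := by
    simp_rw [hfderiv]
    exact (hvc.comp_sub_left x).neg.locallyIntegrable.integrable_smul_left_of_hasCompactSupport
      hη.continuous hcη
  have hparts := integral_mul_fderiv_eq_neg_fderiv_mul_of_integrable (μ := μ)
    (f := η) (g := fun s => v (x - s)) (v := c)
    ((((hη.continuous_fderiv (by simp)).clm_apply continuous_const).mul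
      hvx.continuous).integrable_of_hasCompactSupport hcηc.mul_right) hint
    ((hη.continuous.mul hvx.continuous).integrable_of_hasCompactSupport hcη.mul_right)
    (fun z _ => hη.differentiable (by simp) z) (fun z _ => hvx z)
  simp_rw [hfderiv, mul_neg, integral_neg, neg_inj] at hparts
  rw [hleft, hparts]

theorem integral_mul_integral_mul_sub_swap {η p q : V → ℝ} (hη : Continuous η)
    (hcη : HasCompactSupport η) (hp : Integrable p μ) (hq : Integrable q μ) :
    ∫ s, η s * ∫ x, p x * q (x - s) ∂μ ∂μ = ∫ x, p x * ∫ s, η s * q (x - s) ∂μ ∂μ := by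
  obtain ⟨M, hM⟩ := hη.bounded_above_of_compact_support hcη
  have hpq : Integrable (fun z : V × V => p z.2 * q (z.2 - z.1)) (μ.prod μ) := by
    simpa using hp.convolution_integrand (ContinuousLinearMap.mul ℝ ℝ) hq.comp_neg
  have hηpq : Integrable (fun z : V × V => η z.1 * (p z.2 * q (z.2 - z.1))) (μ.prod μ) :=
    hpq.bdd_mul (hη.comp continuous_fst).aestronglyMeasurable (Eventually.of_forall fun z => hM z.1)
  simp_rw [← integral_const_mul]
  rw [integral_integral_swap hηpq]
  simp_rw [mul_left_comm]

-- Mollifying `v` in the cross-correlation of the two derivatives reduces to the smooth case.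
theorem integral_fderiv_mul_fderiv_comm {h v : V → ℝ} (hh : Differentiable ℝ h)
    (hv : Differentiable ℝ v) (hch : HasCompactSupport h) (hcv : HasCompactSupport v)
    (hh2 : MemLp (fderiv ℝ h) 2 μ) (hv2 : MemLp (fderiv ℝ v) 2 μ) (a b : V) :
    ∫ z, fderiv ℝ h z a * fderiv ℝ v z b ∂μ = ∫ z, fderiv ℝ h z b * fderiv ℝ v z a ∂μ := by
  have hh1 := integrable_of_memLp_two_of_hasCompactSupport (hch.fderiv (𝕜 := ℝ)) hh2
  have hv1 := integrable_of_memLp_two_of_hasCompactSupport (hcv.fderiv (𝕜 := ℝ)) hv2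
  let eval (c : V) : (V →L[ℝ] ℝ) →L[ℝ] ℝ := ContinuousLinearMap.apply ℝ ℝ c
  let B (a b s : V) : ℝ := ∫ x, fderiv ℝ h x a * fderiv ℝ v (x - s) b ∂μ
  have hB : ∀ a b, Continuous (B a b) := fun a b =>
    continuous_integral_mul_sub ((eval a).comp_memLp' hh2) ((eval b).comp_memLp' hv2)
  suffices hzero : (fun s => B a b s - B b a s) = 0 by
    simpa [B, sub_eq_zero] using congrFun hzero 0
  have hcont : Continuous fun s => B a b s - B b a s := (hB a b).sub (hB b a)
  refine Measure.eq_of_ae_eq (μ := μ) (ae_eq_zero_of_integral_contDiff_smul_eq_zero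
    hcont.locallyIntegrable fun η hη hcη => ?_) hcont continuous_const
  have hw : ContDiff ℝ ∞ (convolution η v (ContinuousLinearMap.lsmul ℝ ℝ) μ) :=
    hcη.contDiff_convolution_left _ hη hv.continuous.locallyIntegrable
  have hswap : ∀ a b, ∫ s, η s * B a b s ∂μ = ∫ x, fderiv ℝ h x a *
      fderiv ℝ (convolution η v (ContinuousLinearMap.lsmul ℝ ℝ) μ) x b ∂μ := by
    intro a b
    simp_rw [fderiv_convolution_lsmul_apply (hη.of_le (by simp)) hcη hv b
      ((eval b).integrable_comp hv1)]
    exact integral_mul_integral_mul_sub_swap hη.continuous hcη ((eval a).integrable_comp hh1)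
      ((eval b).integrable_comp hv1)
  have hint : ∀ a b, Integrable (fun s => η s * B a b s) μ := fun a b =>
    (hη.continuous.mul (hB a b)).integrable_of_hasCompactSupport hcη.mul_right
  simp only [smul_eq_mul, mul_sub]
  rw [integral_sub (hint a b) (hint b a), hswap, hswap,
    integral_fderiv_mul_fderiv_comm_of_contDiff hh hch hh1
      (hw.of_le (WithTop.coe_le_coe.2 le_top)), sub_self]

theorem memLp_fderiv_cutoff_mul {ψ u : V → ℝ} {S : Set V} (hS : IsOpen S) (hψ : ContDiff ℝ 1 ψ)
    (hc : HasCompactSupport ψ) (hψS : tsupport ψ ⊆ S) (hu : DifferentiableOn ℝ u S)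
    {p : ENNReal} (hup : MemLp (fderiv ℝ u) p (μ.restrict (tsupport ψ))) :
    MemLp (fderiv ℝ fun z => ψ z * u z) p μ := by
  have hK : MeasurableSet (tsupport ψ) := (isClosed_tsupport ψ).measurableSet
  have : IsFiniteMeasure (μ.restrict (tsupport ψ)) := ⟨by simpa using hc.isCompact.measure_lt_top⟩
  obtain ⟨A, hA⟩ := hψ.continuous.bounded_above_of_compact_support hc
  obtain ⟨B, hB⟩ := (hψ.continuous_fderiv (by simp)).bounded_above_of_compact_support
    (hc.fderiv (𝕜 := ℝ))
  obtain ⟨D, hD⟩ := hc.isCompact.exists_bound_of_continuousOn (hu.continuousOn.mono hψS)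
  have hsupp : Function.support (fderiv ℝ fun z => ψ z * u z) ⊆ tsupport ψ := by
    intro z hz
    exact closure_mono (Function.support_mul_subset_left ψ u)
      (tsupport_fderiv_subset ℝ (subset_tsupport _ hz))
  have hbound : ∀ z ∈ tsupport ψ,
      ‖fderiv ℝ (fun z => ψ z * u z) z‖ ≤ ‖A * ‖fderiv ℝ u z‖ + D * B‖ := by
    intro z hz
    have hz' := hu.differentiableAt (hS.mem_nhds (hψS hz))
    refine le_trans ?_ (Real.le_norm_self _)
    rw [fderiv_fun_mul (hψ.differentiable (by simp) z) hz']
    refine (norm_add_le _ _).trans ?_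
    rw [norm_smul, norm_smul]
    gcongr
    exacts [hA z, (norm_nonneg _).trans (hD z hz), hD z hz, hB z]
  rw [← Set.indicator_eq_self.2 hsupp]
  refine (memLp_indicator_iff_restrict (ε := V →L[ℝ] ℝ) hK).2 ?_
  refine MemLp.of_le ((hup.norm.const_mul A).add (memLp_const (D * B)))
    (measurable_fderiv ℝ _).aestronglyMeasurable ?_
  filter_upwards [ae_restrict_mem hK] with z hz using hbound z hz

theorem integral_fderiv_mul_fderiv_comm_of_tsupport_subset {h v : V → ℝ} {S : Set V}
    (hS : IsOpen S) (hh : Differentiable ℝ h) (hch : HasCompactSupport h) (hhS : tsupport h ⊆ S)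
    (hh2 : MemLp (fderiv ℝ h) 2 μ) (hv : DifferentiableOn ℝ v S)
    (hv2 : ∀ k ⊆ S, IsCompact k → MemLp (fderiv ℝ v) 2 (μ.restrict k)) (a b : V) :
    Integrable (fun z => fderiv ℝ h z a * fderiv ℝ v z b) μ ∧
      ∫ z, fderiv ℝ h z a * fderiv ℝ v z b ∂μ = ∫ z, fderiv ℝ h z b * fderiv ℝ v z a ∂μ := by
  obtain ⟨k, hk, hhk, hkS⟩ := exists_compact_between hch.isCompact hS hhS
  obtain ⟨χ, hχ1, hχ0, -⟩ := exists_contMDiffMap_one_nhds_of_subset_interior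
    (n := 1) (modelWithCornersSelf ℝ V) (isClosed_tsupport h) hhk
  have hχk : tsupport χ ⊆ k :=
    closure_minimal (Function.support_subset_iff'.2 hχ0) hk.isClosed
  have hcχ : HasCompactSupport χ := hk.of_isClosed_subset (isClosed_tsupport _) hχk
  have hχ : ContDiff ℝ 1 χ := χ.contMDiff.contDiff
  have hw := differentiable_cutoff_mul hS (hχ.differentiable (by simp)) (hχk.trans hkS) hv
  have hw2 := memLp_fderiv_cutoff_mul hS hχ hcχ (hχk.trans hkS) hv
    (hv2 _ (hχk.trans hkS) hcχ.isCompact)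
  have hwv : ∀ a b z, fderiv ℝ h z a * fderiv ℝ (fun z => χ z * v z) z b =
      fderiv ℝ h z a * fderiv ℝ v z b := by
    intro a b z
    by_cases hz : z ∈ tsupport h
    · have hev : (fun z => χ z * v z) =ᶠ[𝓝 z] v := by
        filter_upwards [hχ1.filter_mono (nhds_le_nhdsSet hz)] with w hw
        rw [hw, one_mul]
      rw [hev.fderiv_eq]
    · simp [image_eq_zero_of_notMem_tsupport fun hz' => hz (tsupport_fderiv_subset ℝ hz')]
  let eval (c : V) : (V →L[ℝ] ℝ) →L[ℝ] ℝ := ContinuousLinearMap.apply ℝ ℝ c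
  simp_rw [← hwv]
  exact ⟨((eval a).comp_memLp' hh2).integrable_mul ((eval b).comp_memLp' hw2),
    integral_fderiv_mul_fderiv_comm hh hw hch hcχ.mul_right hh2 hw2 a b⟩

theorem eq_zero_of_fderiv_ae_eq_zero [Nontrivial V] {h : V → ℝ} (hd : Differentiable ℝ h)
    (hc : HasCompactSupport h) (h0 : fderiv ℝ h =ᵐ[μ] 0) : h = 0 := by
  obtain ⟨a, ha⟩ := exists_ne (0 : V)
  obtain ⟨ℓ, hℓ⟩ := SeparatingDual.exists_eq_one (R := ℝ) ha
  have hcsq : HasCompactSupport fun z => h z * h z := hc.mul_right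
  have hsq0 : (fderiv ℝ fun z => h z * h z) =ᵐ[μ] 0 := by
    filter_upwards [h0] with z hz
    simp [fderiv_fun_mul (hd z) (hd z), hz]
  have hparts := integral_fderiv_mul_eq_neg_integral_mul_fderiv (hd.mul hd) hcsq
    ((integrable_zero V (V →L[ℝ] ℝ) μ).congr hsq0.symm) ℓ.contDiff a
  have hleft : ∫ z, fderiv ℝ (fun z => h z * h z) z a * ℓ z ∂μ = 0 :=
    integral_eq_zero_of_ae (by filter_upwards [hsq0] with z hz; simp [hz])
  have hsq : ∫ z, h z * h z ∂μ = 0 := by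
    simpa [hℓ] using neg_eq_zero.1 (hparts.symm.trans hleft)
  have hcont : Continuous fun z => h z * h z := hd.continuous.mul hd.continuous
  rw [integral_eq_zero_iff_of_nonneg (fun z => mul_self_nonneg (h z))
    (hcont.integrable_of_hasCompactSupport hcsq)] at hsq
  funext z
  exact mul_self_eq_zero.1 (congrFun (hcont.ae_eq_iff_eq μ continuous_const |>.1 hsq) z)

end HaarMeasure

section PlanarMaps

/-- The coefficient of `dx ∧ dy` in the wedge product of two real covectors on `ℂ`. -/
def wedge (ℓ m : ℂ →L[ℝ] ℝ) : ℝ :=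
  ℓ 1 * m I - ℓ I * m 1

/-- `f` is pointwise differentiable on `S` with `‖Df‖² ≤ K det Df`. Unlike in the usual notion of
a quasiregular map, no local integrability of `‖Df‖²` is required. -/
def IsQuasiregularOn (K : ℝ) (f : ℂ → ℂ) (S : Set ℂ) : Prop :=
  ∀ z ∈ S, DifferentiableAt ℝ f z ∧ ‖fderiv ℝ f z‖ ^ 2 ≤ K * (fderiv ℝ f z).det

/-- The Dirichlet energy `s ↦ ∫ₛ ‖Df‖²` of a planar map, as a measure. -/
def dirichletEnergy (f : ℂ → ℂ) : Measure ℂ :=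
  volume.withDensity fun z => ‖fderiv ℝ f z‖ₑ ^ 2

variable {K M : ℝ} {f : ℂ → ℂ} {S : Set ℂ}

theorem abs_wedge_le (ℓ m : ℂ →L[ℝ] ℝ) : |wedge ℓ m| ≤ 2 * (‖ℓ‖ * ‖m‖) := by
  have hℓ1 : |ℓ 1| ≤ ‖ℓ‖ := by simpa using ℓ.le_opNorm 1
  have hℓI : |ℓ I| ≤ ‖ℓ‖ := by simpa using ℓ.le_opNorm I
  have hm1 : |m 1| ≤ ‖m‖ := by simpa using m.le_opNorm 1
  have hmI : |m I| ≤ ‖m‖ := by simpa using m.le_opNorm I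
  calc |wedge ℓ m| ≤ |ℓ 1| * |m I| + |ℓ I| * |m 1| := by
        simpa only [wedge, abs_mul] using abs_sub (ℓ 1 * m I) (ℓ I * m 1)
    _ ≤ ‖ℓ‖ * ‖m‖ + ‖ℓ‖ * ‖m‖ := by gcongr
    _ = 2 * (‖ℓ‖ * ‖m‖) := by ring

theorem det_eq_wedge (L : ℂ →L[ℝ] ℂ) : L.det = wedge (reCLM.comp L) (imCLM.comp L) := by
  rw [ContinuousLinearMap.det, ← LinearMap.det_toMatrix basisOneI, Matrix.det_fin_two]
  simp [LinearMap.toMatrix_apply, wedge]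

theorem norm_reCLM_comp_le (L : ℂ →L[ℝ] ℂ) : ‖reCLM.comp L‖ ≤ ‖L‖ := by
  simpa using reCLM.opNorm_comp_le L

theorem hasFDerivAt_clm_comp {z : ℂ} (φ : ℂ →L[ℝ] ℝ) (hf : DifferentiableAt ℝ f z) :
    HasFDerivAt (fun z => φ (f z)) (φ.comp (fderiv ℝ f z)) z :=
  φ.hasFDerivAt.comp z hf.hasFDerivAt

theorem memLp_fderiv_clm_comp {p : ENNReal} {k : Set ℂ} (φ : ℂ →L[ℝ] ℝ) (hk : MeasurableSet k)
    (hd : ∀ z ∈ k, DifferentiableAt ℝ f z) (hf : MemLp (fderiv ℝ f) p (volume.restrict k)) :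
    MemLp (fderiv ℝ fun z => φ (f z)) p (volume.restrict k) := by
  refine (memLp_congr_ae ?_).2 ((ContinuousLinearMap.compL ℝ ℂ ℂ ℝ φ).comp_memLp' hf)
  filter_upwards [ae_restrict_mem hk] with z hz
  exact (hasFDerivAt_clm_comp φ (hd z hz)).fderiv

theorem memLp_two_fderiv_iff_dirichletEnergy_lt_top {s : Set ℂ} :
    MemLp (fderiv ℝ f) 2 (volume.restrict s) ↔ dirichletEnergy f s < ⊤ := by
  have hm : AEStronglyMeasurable (fderiv ℝ f) (volume.restrict s) :=
    (measurable_fderiv ℝ f).aestronglyMeasurable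
  rw [MemLp, and_iff_right hm, eLpNorm_lt_top_iff_lintegral_rpow_enorm_lt_top (by simp) (by simp),
    dirichletEnergy, withDensity_apply']
  simp

theorem IsQuasiregularOn.mono {K' : ℝ} {T : Set ℂ} (hf : IsQuasiregularOn K f S) (hK : 0 < K)
    (hKK' : K ≤ K') (hTS : T ⊆ S) : IsQuasiregularOn K' f T := by
  intro z hz
  obtain ⟨hd, hle⟩ := hf z (hTS hz)
  exact ⟨hd, hle.trans (mul_le_mul_of_nonneg_right hKK'
    (nonneg_of_mul_nonneg_right ((sq_nonneg _).trans hle) hK))⟩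

theorem IsQuasiregularOn.differentiableOn (hf : IsQuasiregularOn K f S) :
    DifferentiableOn ℝ f S := fun z hz => (hf z hz).1.differentiableWithinAt

theorem IsQuasiregularOn.det_nonneg {z : ℂ} (hf : IsQuasiregularOn K f S) (hK : 0 < K)
    (hz : z ∈ S) : 0 ≤ (fderiv ℝ f z).det :=
  nonneg_of_mul_nonneg_right ((sq_nonneg _).trans (hf z hz).2) hK

theorem integral_wedge_fderiv_eq_zero {h : ℂ → ℝ} (hS : IsOpen S) (hh : Differentiable ℝ h)
    (hch : HasCompactSupport h) (hhS : tsupport h ⊆ S) (hh2 : MemLp (fderiv ℝ h) 2)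
    (φ : ℂ →L[ℝ] ℝ) (hf : DifferentiableOn ℝ f S)
    (hE : ∀ k ⊆ S, IsCompact k → dirichletEnergy f k < ⊤) :
    Integrable (fun z => wedge (fderiv ℝ h z) (fderiv ℝ (fun z => φ (f z)) z)) ∧
      ∫ z, wedge (fderiv ℝ h z) (fderiv ℝ (fun z => φ (f z)) z) = 0 := by
  have hcomm := integral_fderiv_mul_fderiv_comm_of_tsupport_subset (μ := volume) hS hh hch hhS hh2
    (φ.differentiable.comp_differentiableOn hf) fun k hkS hk =>
      memLp_fderiv_clm_comp φ hk.measurableSet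
        (fun z hz => hf.differentiableAt (hS.mem_nhds (hkS hz)))
        (memLp_two_fderiv_iff_dirichletEnergy_lt_top.2 (hE k hkS hk))
  refine ⟨(hcomm 1 I).1.sub (hcomm I 1).1, ?_⟩
  exact (integral_sub (hcomm 1 I).1 (hcomm I 1).1).trans (sub_eq_zero.2 (hcomm 1 I).2)

theorem sq_mul_sq_norm_le_wedge {t s : ℝ} {L : ℂ →L[ℝ] ℂ} (hK : 0 < K)
    (hL : ‖L‖ ^ 2 ≤ K * L.det) (ℓ : ℂ →L[ℝ] ℝ) :
    t ^ 2 * ‖L‖ ^ 2 ≤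
      -(2 * K) * wedge (t ^ 2 • imCLM.comp L + s • (2 * t) • ℓ) (reCLM.comp L) +
        16 * K ^ 2 * s ^ 2 * ‖ℓ‖ ^ 2 := by
  have hwedge : wedge (t ^ 2 • imCLM.comp L + s • (2 * t) • ℓ) (reCLM.comp L) =
      2 * (t * s * wedge ℓ (reCLM.comp L)) - t ^ 2 * L.det := by
    rw [det_eq_wedge]
    simp only [wedge, add_apply, smul_apply, ContinuousLinearMap.comp_apply, imCLM_apply,
      smul_eq_mul, reCLM_apply]
    ring
  have hcross : t * s * wedge ℓ (reCLM.comp L) ≤ 2 * (|t| * ‖L‖) * (|s| * ‖ℓ‖) := by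
    calc t * s * wedge ℓ (reCLM.comp L) ≤ |t * s| * |wedge ℓ (reCLM.comp L)| := by
          rw [← abs_mul]; exact le_abs_self _
      _ ≤ |t| * |s| * (2 * (‖ℓ‖ * ‖L‖)) := by
          rw [abs_mul]
          gcongr
          exact (abs_wedge_le _ _).trans (by gcongr; exact norm_reCLM_comp_le L)
      _ = 2 * (|t| * ‖L‖) * (|s| * ‖ℓ‖) := by ring
  have hyoung : 8 * K * (|t| * ‖L‖) * (|s| * ‖ℓ‖) ≤
      t ^ 2 * ‖L‖ ^ 2 + 16 * K ^ 2 * s ^ 2 * ‖ℓ‖ ^ 2 := by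
    rw [← sq_abs t, ← sq_abs s]
    linarith [sq_nonneg (|t| * ‖L‖ - 4 * K * (|s| * ‖ℓ‖))]
  rw [hwedge]
  linarith [mul_le_mul_of_nonneg_left hcross (by positivity : 0 ≤ 4 * K),
    mul_le_mul_of_nonneg_left hL (by positivity : 0 ≤ 2 * t ^ 2)]

theorem tsupport_sq_subset (ψ : ℂ → ℝ) : tsupport (fun z => ψ z ^ 2) ⊆ tsupport ψ :=
  closure_mono fun z hz h0 => hz (by simp [show ψ z = 0 from h0])

theorem IsQuasiregularOn.sq_mul_sq_norm_fderiv_le {b : ℝ} {ψ : ℂ → ℝ} (hK : 0 < K)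
    (hf : IsQuasiregularOn K f S) (hM : ∀ z ∈ S, |(f z).im - b| ≤ M) (hψ : Differentiable ℝ ψ)
    (hψS : tsupport ψ ⊆ S) (z : ℂ) :
    ψ z ^ 2 * ‖fderiv ℝ f z‖ ^ 2 ≤
      -(2 * K) * wedge (fderiv ℝ (fun z => ψ z ^ 2 * ((f z).im - b)) z)
        (fderiv ℝ (fun z => reCLM (f z)) z) + 16 * K ^ 2 * M ^ 2 * ‖fderiv ℝ ψ z‖ ^ 2 := by
  by_cases hz : z ∈ tsupport ψ
  · obtain ⟨hd, hqr⟩ := hf z (hψS hz)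
    have hψ2 : HasFDerivAt (fun z => ψ z ^ 2) ((2 * ψ z) • fderiv ℝ ψ z) z := by
      simpa using (hψ z).hasFDerivAt.pow 2
    have him : HasFDerivAt (fun z => (f z).im - b) (imCLM.comp (fderiv ℝ f z)) z :=
      (hasFDerivAt_clm_comp imCLM hd).sub_const b
    rw [(hψ2.fun_mul him).fderiv, (hasFDerivAt_clm_comp reCLM hd).fderiv]
    have hM2 : ((f z).im - b) ^ 2 ≤ M ^ 2 := sq_le_sq' (abs_le.1 (hM z (hψS hz))).1
      (abs_le.1 (hM z (hψS hz))).2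
    refine (sq_mul_sq_norm_le_wedge (s := (f z).im - b) hK hqr (fderiv ℝ ψ z)).trans ?_
    gcongr
  · have hψz : ψ z = 0 := image_eq_zero_of_notMem_tsupport hz
    have hDh : fderiv ℝ (fun z => ψ z ^ 2 * ((f z).im - b)) z = 0 :=
      image_eq_zero_of_notMem_tsupport fun h' => hz (tsupport_sq_subset ψ
        (tsupport_mul_subset_left (tsupport_fderiv_subset ℝ h')))
    rw [hψz, hDh]
    simp only [wedge, zero_apply, zero_mul, sub_zero, mul_zero, zero_add, ne_eq,
      OfNat.ofNat_ne_zero, not_false_eq_true, zero_pow]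
    positivity

theorem integral_wedge_fderiv_sq_mul_im_eq_zero {b : ℝ} {ψ : ℂ → ℝ} (hS : IsOpen S)
    (hf : DifferentiableOn ℝ f S) (hE : ∀ k ⊆ S, IsCompact k → dirichletEnergy f k < ⊤)
    (hψ : ContDiff ℝ 1 ψ) (hc : HasCompactSupport ψ) (hψS : tsupport ψ ⊆ S) :
    Integrable (fun z => wedge (fderiv ℝ (fun z => ψ z ^ 2 * ((f z).im - b)) z)
        (fderiv ℝ (fun z => reCLM (f z)) z)) ∧
      ∫ z, wedge (fderiv ℝ (fun z => ψ z ^ 2 * ((f z).im - b)) z)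
        (fderiv ℝ (fun z => reCLM (f z)) z) = 0 := by
  have hψ2 : ContDiff ℝ 1 fun z => ψ z ^ 2 := hψ.pow 2
  have hψ2S : tsupport (fun z => ψ z ^ 2) ⊆ S := (tsupport_sq_subset ψ).trans hψS
  have hc2 : HasCompactSupport fun z => ψ z ^ 2 :=
    hc.isCompact.of_isClosed_subset (isClosed_tsupport _) (tsupport_sq_subset ψ)
  have hud : DifferentiableOn ℝ (fun z => (f z).im - b) S :=
    (imCLM.differentiable.comp_differentiableOn hf).sub_const b
  have hu2 : MemLp (fderiv ℝ fun z => (f z).im - b) 2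
      (volume.restrict (tsupport fun z => ψ z ^ 2)) := by
    have hDu : (fderiv ℝ fun z => (f z).im - b) = fderiv ℝ fun z => imCLM (f z) :=
      funext fun z => fderiv_sub_const b
    rw [hDu]
    exact memLp_fderiv_clm_comp imCLM hc2.isCompact.measurableSet
      (fun z hz => hf.differentiableAt (hS.mem_nhds (hψ2S hz)))
      (memLp_two_fderiv_iff_dirichletEnergy_lt_top.2 (hE _ hψ2S hc2.isCompact))
  have hd := differentiable_cutoff_mul hS (hψ2.differentiable (by simp)) hψ2S hud
  have hm := memLp_fderiv_cutoff_mul hS hψ2 hc2 hψ2S hud hu2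
  have hsub : tsupport (fun z => ψ z ^ 2 * ((f z).im - b)) ⊆ S :=
    (tsupport_mul_subset_left (f := fun z => ψ z ^ 2)).trans hψ2S
  exact integral_wedge_fderiv_eq_zero hS hd hc2.mul_right hsub hm reCLM hf hE

-- Caccioppoli: `∫ d(ψ² (im f - b)) ∧ d(re f) = 0`.
theorem IsQuasiregularOn.integral_sq_mul_sq_norm_fderiv_le {b : ℝ} {ψ : ℂ → ℝ} (hK : 0 < K)
    (hS : IsOpen S) (hf : IsQuasiregularOn K f S)
    (hE : ∀ k ⊆ S, IsCompact k → dirichletEnergy f k < ⊤) (hM : ∀ z ∈ S, |(f z).im - b| ≤ M)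
    (hψ : ContDiff ℝ 1 ψ) (hc : HasCompactSupport ψ) (hψS : tsupport ψ ⊆ S) :
    Integrable (fun z => ψ z ^ 2 * ‖fderiv ℝ f z‖ ^ 2) ∧
      ∫ z, ψ z ^ 2 * ‖fderiv ℝ f z‖ ^ 2 ≤ 16 * K ^ 2 * M ^ 2 * ∫ z, ‖fderiv ℝ ψ z‖ ^ 2 := by
  obtain ⟨hint, hzero⟩ := integral_wedge_fderiv_sq_mul_im_eq_zero (b := b) hS hf.differentiableOn
    hE hψ hc hψS
  have hDψ : Continuous fun z => ‖fderiv ℝ ψ z‖ ^ 2 := (hψ.continuous_fderiv (by simp)).norm.pow 2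
  have hDψc : HasCompactSupport fun z => ‖fderiv ℝ ψ z‖ ^ 2 :=
    (hc.fderiv (𝕜 := ℝ)).comp_left (g := fun L : ℂ →L[ℝ] ℝ => ‖L‖ ^ 2) (by simp)
  have hintψ : Integrable fun z => ‖fderiv ℝ ψ z‖ ^ 2 := hDψ.integrable_of_hasCompactSupport hDψc
  have hpointwise := hf.sq_mul_sq_norm_fderiv_le hK hM (hψ.differentiable (by simp)) hψS
  have hbound := (hint.const_mul (-(2 * K))).add (hintψ.const_mul (16 * K ^ 2 * M ^ 2))
  have hintf : Integrable fun z => ψ z ^ 2 * ‖fderiv ℝ f z‖ ^ 2 := by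
    refine hbound.mono' ((hψ.continuous.measurable.pow_const 2).mul
      ((measurable_fderiv ℝ f).norm.pow_const 2)).aestronglyMeasurable ?_
    refine Eventually.of_forall fun z => ?_
    rw [Real.norm_of_nonneg (by positivity)]
    exact hpointwise z
  refine ⟨hintf, (integral_mono hintf hbound hpointwise).trans_eq ?_⟩
  simp only [Pi.add_apply]
  rw [integral_add (hint.const_mul _) (hintψ.const_mul _), integral_const_mul, hzero,
    integral_const_mul, mul_zero, zero_add]

theorem exists_cutoff_closedBall : ∃ A : ℝ, ∀ (y : ℂ) {r : ℝ}, 0 < r → ∃ ψ : ℂ → ℝ,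
    ContDiff ℝ 1 ψ ∧ tsupport ψ ⊆ closedBall y r ∧ (∀ z ∈ closedBall y (r / 2), ψ z = 1) ∧
      ∫ z, ‖fderiv ℝ ψ z‖ ^ 2 ≤ A := by
  let φ : ContDiffBump (0 : ℂ) := ⟨1 / 2, 1, by norm_num, by norm_num⟩
  have hφ : ContDiff ℝ 1 φ := φ.contDiff
  refine ⟨∫ z, ‖fderiv ℝ φ z‖ ^ 2, fun y r hr => ⟨fun z => φ (r⁻¹ • (z - y)), ?_, ?_, ?_, ?_⟩⟩
  · exact hφ.comp (by fun_prop)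
  · refine closure_minimal (fun z hz => ?_) isClosed_closedBall
    have hz1 : r⁻¹ * dist z y < 1 := by
      have : r⁻¹ • (z - y) ∈ Function.support φ := hz
      rwa [φ.support_eq, mem_ball_zero_iff, norm_smul, Real.norm_of_nonneg (by positivity),
        ← dist_eq_norm] at this
    rw [inv_mul_lt_iff₀ hr, mul_one] at hz1
    exact hz1.le
  · intro z hz
    refine φ.one_of_mem_closedBall ?_
    rw [mem_closedBall_zero_iff, norm_smul, Real.norm_of_nonneg (by positivity), ← dist_eq_norm,
      inv_mul_le_iff₀ hr]
    exact (mem_closedBall.1 hz).trans_eq (by ring)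
  · have hfderiv : ∀ z, fderiv ℝ (fun z => φ (r⁻¹ • (z - y))) z =
        r⁻¹ • fderiv ℝ φ (r⁻¹ • (z - y)) := fun z => by
      rw [fderiv_comp_sub (f := fun z => φ (r⁻¹ • z)), fderiv_comp_smul]
    -- The Dirichlet energy is conformally invariant in the plane.
    have hscale : ∫ z, ‖fderiv ℝ (fun z => φ (r⁻¹ • (z - y))) z‖ ^ 2 =
        ∫ z, ‖fderiv ℝ φ z‖ ^ 2 := by
      simp_rw [hfderiv, norm_smul, mul_pow]
      rw [integral_const_mul, integral_sub_right_eq_self (fun z => ‖fderiv ℝ φ (r⁻¹ • z)‖ ^ 2) y,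
        Measure.integral_comp_inv_smul volume (fun z => ‖fderiv ℝ φ z‖ ^ 2)]
      simp [hr.ne', abs_of_pos hr]
    exact hscale.le

theorem exists_dirichletEnergy_closedBall_le_of_finite : ∃ A : ℝ, 0 < A ∧ ∀ {K M b r : ℝ} {y : ℂ}
    {f : ℂ → ℂ} {S : Set ℂ}, 0 < K → 0 < r → IsOpen S → closedBall y r ⊆ S →
    IsQuasiregularOn K f S → (∀ k ⊆ S, IsCompact k → dirichletEnergy f k < ⊤) →
    (∀ z ∈ S, |(f z).im - b| ≤ M) →
    dirichletEnergy f (closedBall y (r / 2)) ≤ ENNReal.ofReal (A * K ^ 2 * M ^ 2) := by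
  obtain ⟨A, hA⟩ := exists_cutoff_closedBall
  refine ⟨16 * max A 1, by positivity, fun {K M b r y f S} hK hr hS hyS hf hE hM => ?_⟩
  obtain ⟨ψ, hψ, hψr, hψ1, hψA⟩ := hA y hr
  have hc : HasCompactSupport ψ :=
    (isCompact_closedBall y r).of_isClosed_subset (isClosed_tsupport ψ) hψr
  obtain ⟨hint, hle⟩ := hf.integral_sq_mul_sq_norm_fderiv_le hK hS hE hM hψ hc (hψr.trans hyS)
  calc dirichletEnergy f (closedBall y (r / 2))
      = ∫⁻ z in closedBall y (r / 2), ‖fderiv ℝ f z‖ₑ ^ 2 := withDensity_apply' _ _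
    _ = ∫⁻ z in closedBall y (r / 2), ENNReal.ofReal (ψ z ^ 2 * ‖fderiv ℝ f z‖ ^ 2) := by
        refine setLIntegral_congr_fun isClosed_closedBall.measurableSet fun z hz => ?_
        simp [hψ1 z hz, ENNReal.ofReal_pow]
    _ ≤ ∫⁻ z, ENNReal.ofReal (ψ z ^ 2 * ‖fderiv ℝ f z‖ ^ 2) := setLIntegral_le_lintegral _ _
    _ = ENNReal.ofReal (∫ z, ψ z ^ 2 * ‖fderiv ℝ f z‖ ^ 2) :=
        (ofReal_integral_eq_lintegral_ofReal hint
          (Eventually.of_forall fun z => by positivity)).symm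
    _ ≤ ENNReal.ofReal (16 * max A 1 * K ^ 2 * M ^ 2) := by
        refine ENNReal.ofReal_le_ofReal (hle.trans ?_)
        calc 16 * K ^ 2 * M ^ 2 * ∫ z, ‖fderiv ℝ ψ z‖ ^ 2 ≤ 16 * K ^ 2 * M ^ 2 * max A 1 := by
              gcongr
              exact hψA.trans (le_max_left A 1)
          _ = 16 * max A 1 * K ^ 2 * M ^ 2 := by ring

theorem measure_le_of_forall_closedBall_le {X : Type*} [PseudoMetricSpace X]
    [SecondCountableTopology X] [MeasurableSpace X] [OpensMeasurableSpace X] {μ ν : Measure X}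
    {s U : Set X} {r : X → ℝ} {R : ℝ} {c : ENNReal} (hr : ∀ y ∈ s, 0 < r y) (hR : ∀ y ∈ s, r y ≤ R)
    (hU : ∀ y ∈ s, closedBall y (r y) ⊆ U)
    (hν : ∀ y ∈ s, ν (closedBall y (5 * r y)) ≤ c * μ (closedBall y (r y))) : ν s ≤ c * μ U := by
  obtain ⟨u, hus, hdisj, hcover⟩ :=
    Vitali.exists_disjoint_subfamily_covering_enlargement_closedBall s id r R hR 5 (by norm_num)
  have hu : u.Countable := hdisj.countable_of_nonempty_interior fun y hy =>
    ⟨y, ball_subset_interior_closedBall (mem_ball_self (hr y (hus hy)))⟩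
  have hsub : s ⊆ ⋃ y ∈ u, closedBall y (5 * r y) := by
    intro y hy
    obtain ⟨w, hw, hyw⟩ := hcover y hy
    exact mem_biUnion hw (hyw (mem_closedBall_self (hr y hy).le))
  calc ν s ≤ ∑' y : u, ν (closedBall (y : X) (5 * r y)) :=
        (measure_mono hsub).trans (measure_biUnion_le ν hu _)
    _ ≤ ∑' y : u, c * μ (closedBall (y : X) (r y)) :=
        ENNReal.tsum_le_tsum fun y => hν y (hus y.2)
    _ = c * μ (⋃ y ∈ u, closedBall y (r y)) := by
        rw [ENNReal.tsum_mul_left, measure_biUnion (f := fun y => closedBall y (r y)) hu hdisj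
          fun y _ => isClosed_closedBall.measurableSet]
    _ ≤ c * μ U := by
        gcongr
        exact iUnion₂_subset fun y hy => hU y (hus hy)

theorem exists_ball_forall_norm_sub_le_of_differentiableAt {V W : Type*} [NormedAddCommGroup V]
    [NormedSpace ℝ V] [LocallyCompactSpace V] [NormedAddCommGroup W] [NormedSpace ℝ W] {f : V → W}
    {P : Set V} (hP : IsLocallyClosed P) (hne : P.Nonempty)
    (hf : ∀ p ∈ P, DifferentiableAt ℝ f p) :
    ∃ x₀ ∈ P, ∃ ρ > 0, ∃ L : ℝ, 0 ≤ L ∧ ∀ p ∈ P ∩ ball x₀ ρ, ∀ y ∈ ball p ρ,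
      ‖f y - f p‖ ≤ L * ‖y - p‖ := by
  have : LocallyCompactSpace P := hP.locallyCompactSpace
  have : Nonempty P := hne.to_subtype
  let E : ℕ → Set P := fun n => {p | ∀ y ∈ ball (p : V) (1 / (n + 1)), ‖f y - f p‖ ≤ n * ‖y - p‖}
  have hcont : Continuous fun p : P => f p :=
    continuous_iff_continuousAt.2 fun p =>
      ContinuousAt.comp (hf p p.2).continuousAt continuousAt_subtype_val
  have hclosed : ∀ n, IsClosed (E n) := by
    intro n
    have hE : E n = ⋂ y : V, ({p : P | 1 / ((n : ℝ) + 1) ≤ dist y p} ∪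
        {p : P | ‖f y - f p‖ ≤ n * ‖y - p‖}) := by
      ext p
      simp only [E, mem_ofPred_eq, mem_iInter, mem_union, mem_ball]
      refine forall_congr' fun y => ?_
      rw [← not_lt (b := 1 / ((n : ℝ) + 1)), imp_iff_not_or]
    rw [hE]
    exact isClosed_iInter fun y => (isClosed_le (by fun_prop) (by fun_prop)).union
      (isClosed_le (continuous_const.sub hcont).norm (by fun_prop))
  have hcover : ⋃ n, E n = univ := by
    refine eq_univ_of_forall fun p => ?_
    obtain ⟨c, hc⟩ := ((hf p p.2).hasFDerivAt.isBigO_sub).bound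
    obtain ⟨ε, hε, hb⟩ := Metric.eventually_nhds_iff_ball.1 hc
    obtain ⟨n, hεn, hcn⟩ := ((tendsto_one_div_add_atTop_nhds_zero_nat.eventually_lt_const hε).and
      (tendsto_natCast_atTop_atTop.eventually_ge_atTop c)).exists
    refine mem_iUnion.2 ⟨n, fun y hy => (hb y (ball_subset_ball hεn.le hy)).trans ?_⟩
    gcongr
  obtain ⟨n, x₀, hx₀⟩ := nonempty_interior_of_iUnion_of_closed hclosed hcover
  obtain ⟨ε, hε, hεE⟩ := Metric.mem_nhds_iff.1 (mem_interior_iff_mem_nhds.1 hx₀)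
  refine ⟨x₀, x₀.2, min ε (1 / (n + 1)), by positivity, n, by positivity, fun p hp y hy => ?_⟩
  exact hεE (show (⟨p, hp.1⟩ : P) ∈ ball x₀ ε from ball_subset_ball (min_le_left _ _) hp.2) y
    (ball_subset_ball (min_le_right _ _) hy)

theorem dirichletEnergy_lt_top_of_forall_norm_sub_le {L : ℝ} {s : Set ℂ} (hs : volume s < ⊤)
    (hL : 0 ≤ L) (hsm : MeasurableSet s)
    (hf : ∀ p ∈ s, DifferentiableAt ℝ f p ∧ ∀ᶠ y in 𝓝 p, ‖f y - f p‖ ≤ L * ‖y - p‖) :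
    dirichletEnergy f s < ⊤ := by
  have hle : ∀ p ∈ s, ‖fderiv ℝ f p‖ₑ ^ 2 ≤ ENNReal.ofReal L ^ 2 := by
    intro p hp
    rw [← ofReal_norm]
    gcongr
    exact (hf p hp).1.hasFDerivAt.le_of_lip' hL (hf p hp).2
  calc dirichletEnergy f s = ∫⁻ z in s, ‖fderiv ℝ f z‖ₑ ^ 2 := withDensity_apply' _ _
    _ ≤ ∫⁻ _ in s, ENNReal.ofReal L ^ 2 := setLIntegral_mono' hsm hle
    _ = ENNReal.ofReal L ^ 2 * volume s := setLIntegral_const _ _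
    _ < ⊤ := ENNReal.mul_lt_top (by simp) hs

theorem exists_dirichletEnergy_closedBall_le_mul_volume {L : ℝ} (hK : 0 < K) (hL : 0 ≤ L) :
    ∃ B : ℝ, ∀ {d : ℝ} {y p : ℂ} {f : ℂ → ℂ}, 0 < d → dist y p ≤ d →
      IsQuasiregularOn K f (ball y d) →
      (∀ k ⊆ ball y d, IsCompact k → dirichletEnergy f k < ⊤) →
      (∀ z ∈ ball y d, ‖f z - f p‖ ≤ L * ‖z - p‖) →
      dirichletEnergy f (closedBall y (5 * (d / 20))) ≤
        ENNReal.ofReal B * volume (closedBall y (d / 20)) := by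
  obtain ⟨A, hA, hCac⟩ := exists_dirichletEnergy_closedBall_le_of_finite
  refine ⟨1600 * A * K ^ 2 * L ^ 2, fun {d y p f} hd hyp hf hE hLip => ?_⟩
  have hM : ∀ z ∈ ball y d, |(f z).im - (f p).im| ≤ 2 * L * d := by
    intro z hz
    have hzp : dist z p ≤ 2 * d := by linarith [dist_triangle z y p, mem_ball.1 hz]
    calc |(f z).im - (f p).im| ≤ ‖f z - f p‖ := by
          rw [← sub_im]
          exact abs_im_le_norm _
      _ ≤ L * dist z p := by
          rw [dist_eq_norm]
          exact hLip z hz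
      _ ≤ 2 * L * d := by linarith [mul_le_mul_of_nonneg_left hzp hL]
  calc dirichletEnergy f (closedBall y (5 * (d / 20)))
      = dirichletEnergy f (closedBall y (d / 2 / 2)) := by ring_nf
    _ ≤ ENNReal.ofReal (A * K ^ 2 * (2 * L * d) ^ 2) :=
        hCac hK (half_pos hd) isOpen_ball (closedBall_subset_ball (half_lt_self hd)) hf hE hM
    _ = ENNReal.ofReal (1600 * A * K ^ 2 * L ^ 2) * (ENNReal.ofReal (d / 20) ^ 2 * 1) := by
        rw [mul_one, ← ENNReal.ofReal_pow (by positivity), ← ENNReal.ofReal_mul (by positivity)]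
        ring_nf
    _ ≤ ENNReal.ofReal (1600 * A * K ^ 2 * L ^ 2) * volume (closedBall y (d / 20)) := by
        rw [Complex.volume_closedBall]
        gcongr
        exact_mod_cast Real.pi_gt_three.le.trans' (by norm_num)

-- Cover by discs of radius comparable to the distance to `C`, on each of which `f` deviates from
-- its value at a nearest point of `C` by at most a multiple of the radius.
theorem IsQuasiregularOn.dirichletEnergy_ball_diff_lt_top {L s : ℝ} {C : Set ℂ} {x₀ : ℂ}
    (hK : 0 < K) (hC : IsClosed C) (hx₀ : x₀ ∈ C) (hf : IsQuasiregularOn K f (ball x₀ (2 * s)))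
    (hE : ∀ k ⊆ ball x₀ (2 * s) \ C, IsCompact k → dirichletEnergy f k < ⊤) (hL : 0 ≤ L)
    (hLip : ∀ p ∈ C ∩ ball x₀ (2 * s), ∀ y ∈ ball p (2 * s), ‖f y - f p‖ ≤ L * ‖y - p‖) :
    dirichletEnergy f (ball x₀ s \ C) < ⊤ := by
  obtain ⟨B, hB⟩ := exists_dirichletEnergy_closedBall_le_mul_volume hK hL
  have hpos : ∀ y ∈ ball x₀ s \ C, 0 < infDist y C := fun y hy =>
    (hC.notMem_iff_infDist_pos ⟨x₀, hx₀⟩).1 hy.2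
  have hlt : ∀ y ∈ ball x₀ s \ C, infDist y C < s := fun y hy =>
    (infDist_le_dist_of_mem hx₀).trans_lt hy.1
  have hsub : ∀ y ∈ ball x₀ s \ C, ball y (infDist y C) ⊆ ball x₀ (2 * s) := fun y hy =>
    ball_subset_ball' (by linarith [hlt y hy, mem_ball.1 hy.1])
  have hdisc : ∀ y ∈ ball x₀ s \ C, dirichletEnergy f (closedBall y (5 * (infDist y C / 20))) ≤
      ENNReal.ofReal B * volume (closedBall y (infDist y C / 20)) := by
    intro y hy
    obtain ⟨p, hpC, hpy⟩ := hC.exists_infDist_eq_dist ⟨x₀, hx₀⟩ y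
    have hps : p ∈ ball x₀ (2 * s) :=
      mem_ball.2 (by linarith [dist_triangle_left p x₀ y, mem_ball.1 hy.1, hlt y hy])
    refine hB (hpos y hy) hpy.ge (hf.mono hK le_rfl (hsub y hy)) (fun k hk => hE k
      (subset_sdiff.2 ⟨hk.trans (hsub y hy), disjoint_ball_infDist.mono_left hk⟩)) fun z hz => ?_
    exact hLip p ⟨hpC, hps⟩ z
      (mem_ball.2 (by linarith [dist_triangle z y p, mem_ball.1 hz, hlt y hy]))
  refine (measure_le_of_forall_closedBall_le (U := ball x₀ (2 * s)) (R := s) (fun y hy => ?_)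
    (fun y hy => ?_) (fun y hy => ?_) hdisc).trans_lt
    (ENNReal.mul_lt_top ENNReal.ofReal_lt_top measure_ball_lt_top)
  · linarith [hpos y hy]
  · exact (div_le_self infDist_nonneg (by norm_num)).trans (hlt y hy).le
  · exact (closedBall_subset_ball (by linarith [hpos y hy])).trans (hsub y hy)

theorem IsQuasiregularOn.dirichletEnergy_lt_top {k : Set ℂ} (hK : 0 < K) (hS : IsOpen S)
    (hf : IsQuasiregularOn K f S) (hkS : k ⊆ S) (hk : IsCompact k) : dirichletEnergy f k < ⊤ := by
  let G : Set ℂ := {z | (dirichletEnergy f).FiniteAtFilter (𝓝 z)}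
  have hG : IsOpen G := isOpen_iff_eventually.2 fun z ⟨s, hs, hfin⟩ => by
    filter_upwards [eventually_eventually_nhds.2 hs] with w hw using ⟨s, hw, hfin⟩
  have hfin : ∀ k ⊆ G, IsCompact k → dirichletEnergy f k < ⊤ := fun k hkG hk =>
    hk.measure_lt_top_of_nhdsWithin fun z hz => (hkG hz).filter_mono nhdsWithin_le_nhds
  suffices hSG : S ⊆ G from hfin k (hkS.trans hSG) hk
  by_contra hSG
  obtain ⟨x₀, hx₀, ρ, hρ, L, hL, hLip⟩ := exists_ball_forall_norm_sub_le_of_differentiableAt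
    (hS.isLocallyClosed.inter hG.isClosed_compl.isLocallyClosed) (sdiff_nonempty.2 hSG)
    fun p hp => (hf p hp.1).1
  obtain ⟨ε, hε, hεS⟩ := Metric.isOpen_iff.1 hS x₀ hx₀.1
  let s := min ρ ε / 2
  have hs : 0 < s := by positivity
  have hsρ : 2 * s ≤ ρ := (mul_div_cancel₀ _ two_ne_zero).trans_le (min_le_left ρ ε)
  have hsε : 2 * s ≤ ε := (mul_div_cancel₀ _ two_ne_zero).trans_le (min_le_right ρ ε)
  have hsS : ball x₀ (2 * s) ⊆ S := (ball_subset_ball hsε).trans hεS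
  have hLip' : ∀ p ∈ Gᶜ ∩ ball x₀ (2 * s), ∀ y ∈ ball p (2 * s), ‖f y - f p‖ ≤ L * ‖y - p‖ :=
    fun p hp y hy => hLip p ⟨⟨hsS hp.2, hp.1⟩, ball_subset_ball hsρ hp.2⟩ y
      (ball_subset_ball hsρ hy)
  have houter : dirichletEnergy f (ball x₀ s \ Gᶜ) < ⊤ :=
    (hf.mono hK le_rfl hsS).dirichletEnergy_ball_diff_lt_top hK hG.isClosed_compl hx₀.2
      (fun k hk => hfin k fun z hz => not_not.1 (hk hz).2) hL hLip'
  have hss : ball x₀ s ⊆ ball x₀ (2 * s) := ball_subset_ball (by linarith)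
  have hinner : dirichletEnergy f (ball x₀ s ∩ Gᶜ) < ⊤ :=
    dirichletEnergy_lt_top_of_forall_norm_sub_le
      ((measure_mono inter_subset_left).trans_lt measure_ball_lt_top) hL
      (measurableSet_ball.inter hG.measurableSet.compl) fun p hp =>
        ⟨(hf p (hsS (hss hp.1))).1, by
          filter_upwards [ball_mem_nhds p (mul_pos two_pos hs)] with y hy
          exact hLip' p ⟨hp.2, hss hp.1⟩ y hy⟩
  refine hx₀.2 ⟨ball x₀ s, ball_mem_nhds x₀ hs, ?_⟩
  rw [← inter_union_sdiff (ball x₀ s) Gᶜ]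
  exact (measure_union_le _ _).trans_lt (ENNReal.add_lt_top.2 ⟨hinner, houter⟩)

theorem hasDerivAt_max_zero_sq (t : ℝ) : HasDerivAt (fun t : ℝ => max t 0 ^ 2) (2 * max t 0) t := by
  rcases lt_trichotomy t 0 with h | rfl | h
  · have hev : (fun t : ℝ => max t 0 ^ 2) =ᶠ[𝓝 t] fun _ => 0 := by
      filter_upwards [gt_mem_nhds h] with s hs
      rw [max_eq_right hs.le, zero_pow two_ne_zero]
    rw [max_eq_right h.le, mul_zero]
    exact (hasDerivAt_const t 0).congr_of_eventuallyEq hev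
  · have hO : (fun t : ℝ => max t 0 ^ 2) =O[𝓝 0] fun t => ‖t - 0‖ ^ 2 := by
      refine (IsBigO.of_bound' (Eventually.of_forall fun s => ?_)).pow 2
      rw [sub_zero, norm_norm, Real.norm_of_nonneg (le_max_right _ _)]
      exact max_le (le_abs_self s) (norm_nonneg s)
    simpa [hasDerivAt_iff_hasFDerivAt] using hO.hasFDerivAt (𝕜 := ℝ) one_lt_two
  · have hev : (fun t : ℝ => max t 0 ^ 2) =ᶠ[𝓝 t] fun t => t ^ 2 := by
      filter_upwards [lt_mem_nhds h] with s hs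
      rw [max_eq_left hs.le]
    rw [max_eq_left h.le]
    simpa using (hasDerivAt_pow 2 t).congr_of_eventuallyEq hev

-- The boundary condition makes the truncated function `O(‖w - z‖ ^ 2)` at a frontier point `z`.
theorem hasFDerivAt_indicator_max_sub_zero_sq {V : Type*} [NormedAddCommGroup V] [NormedSpace ℝ V]
    {s : Set V} {u : V → ℝ} (hs : IsClosed s) (hu : ∀ z ∈ s, DifferentiableAt ℝ u z)
    (hM : ∀ z ∈ frontier s, u z ≤ M) (z : V) :
    HasFDerivAt (s.indicator fun z => max (u z - M) 0 ^ 2)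
      (s.indicator (fun z => (2 * max (u z - M) 0) • fderiv ℝ u z) z) z := by
  by_cases hz : z ∈ s
  · rw [indicator_of_mem hz]
    by_cases hzi : z ∈ interior s
    · refine ((hasDerivAt_max_zero_sq (u z - M)).comp_hasFDerivAt z
        ((hu z hz).hasFDerivAt.sub_const M)).congr_of_eventuallyEq ?_
      filter_upwards [mem_interior_iff_mem_nhds.1 hzi] with w hw using indicator_of_mem hw _
    · have huz : u z ≤ M := hM z ⟨subset_closure hz, hzi⟩
      have hO : (s.indicator fun z => max (u z - M) 0 ^ 2) =O[𝓝 z] fun w => ‖w - z‖ ^ 2 := by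
        refine IsBigO.trans (IsBigO.of_bound' (Eventually.of_forall fun w => ?_))
          ((hu z hz).isBigO_sub.norm_norm.pow 2)
        rw [norm_pow, norm_norm]
        refine (norm_indicator_le_norm_self _ w).trans ?_
        rw [norm_pow, Real.norm_of_nonneg (le_max_right _ _), Real.norm_eq_abs]
        gcongr
        exact max_le ((sub_le_sub_left huz _).trans (le_abs_self _)) (abs_nonneg _)
      rw [max_eq_right (sub_nonpos.2 huz), mul_zero, zero_smul]
      exact hO.hasFDerivAt one_lt_two
  · rw [indicator_of_notMem hz]
    refine (hasFDerivAt_const (0 : ℝ) z).congr_of_eventuallyEq ?_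
    filter_upwards [hs.isOpen_compl.mem_nhds hz] with w hw using indicator_of_notMem hw _

theorem IsQuasiregularOn.memLp_two_fderiv (hK : 0 < K) (hS : IsOpen S)
    (hf : IsQuasiregularOn K f S) {k : Set ℂ} (hkS : k ⊆ S) (hk : IsCompact k) :
    MemLp (fderiv ℝ f) 2 (volume.restrict k) :=
  memLp_two_fderiv_iff_dirichletEnergy_lt_top.2 (hf.dirichletEnergy_lt_top hK hS hkS hk)

theorem IsQuasiregularOn.fderiv_eq_zero_of_det_eq_zero (hf : IsQuasiregularOn K f S) {z : ℂ}
    (hz : z ∈ S) (hdet : (fderiv ℝ f z).det = 0) : fderiv ℝ f z = 0 := by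
  have hle := (hf z hz).2
  rw [hdet, mul_zero] at hle
  exact norm_eq_zero.1 ((pow_eq_zero_iff two_ne_zero).1 (hle.antisymm (sq_nonneg _)))

theorem IsQuasiregularOn.memLp_two_indicator_smul_fderiv_re {g : ℂ → ℝ} {k : Set ℂ} (hK : 0 < K)
    (hS : IsOpen S) (hf : IsQuasiregularOn K f S) (hk : IsCompact k) (hkS : k ⊆ S)
    (hg : ContinuousOn g k) :
    MemLp (k.indicator fun z => g z • reCLM.comp (fderiv ℝ f z)) 2 := by
  have hre : MemLp (fun z => reCLM.comp (fderiv ℝ f z)) 2 (volume.restrict k) :=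
    (ContinuousLinearMap.compL ℝ ℂ ℂ ℝ reCLM).comp_memLp' (hf.memLp_two_fderiv hK hS hkS hk)
  obtain ⟨B, hB⟩ := hk.exists_bound_of_continuousOn hg
  refine (memLp_indicator_iff_restrict (ε := ℂ →L[ℝ] ℝ) hk.measurableSet).2 (hre.of_le_mul (c := B)
    ((hg.aestronglyMeasurable hk.measurableSet).smul hre.aestronglyMeasurable) ?_)
  filter_upwards [ae_restrict_mem hk.measurableSet] with z hz
  rw [norm_smul]
  exact mul_le_mul_of_nonneg_right (hB z hz) (norm_nonneg _)

-- `∫ dh ∧ d(im f) = 0`, and the integrand is `g * det Df` on `k`.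
theorem IsQuasiregularOn.eq_zero_of_hasFDerivAt_smul_fderiv_re {h g : ℂ → ℝ} {k : Set ℂ}
    (hK : 0 < K) (hS : IsOpen S) (hf : IsQuasiregularOn K f S) (hk : IsCompact k) (hkS : k ⊆ S)
    (hg : ContinuousOn g k) (hg0 : ∀ z ∈ k, 0 ≤ g z) (hhk : Function.support h ⊆ k)
    (hh : ∀ z, HasFDerivAt h (k.indicator (fun z => g z • reCLM.comp (fderiv ℝ f z)) z) z) :
    h = 0 := by
  have hDh : fderiv ℝ h = k.indicator fun z => g z • reCLM.comp (fderiv ℝ f z) :=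
    funext fun z => (hh z).fderiv
  have hd : Differentiable ℝ h := fun z => (hh z).differentiableAt
  have hts : tsupport h ⊆ k := closure_minimal hhk hk.isClosed
  have hc : HasCompactSupport h := hk.of_isClosed_subset (isClosed_tsupport h) hts
  have hL2 : MemLp (fderiv ℝ h) 2 :=
    hDh ▸ hf.memLp_two_indicator_smul_fderiv_re hK hS hk hkS hg
  have hdet : (fun z => wedge (fderiv ℝ h z) (fderiv ℝ (fun z => imCLM (f z)) z)) =
      k.indicator fun z => g z * (fderiv ℝ f z).det := by
    funext z
    by_cases hz : z ∈ k
    · rw [hDh, indicator_of_mem hz, indicator_of_mem hz, det_eq_wedge,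
        (hasFDerivAt_clm_comp imCLM (hf z (hkS hz)).1).fderiv]
      simp only [wedge, FunLike.coe_smul, Pi.smul_apply, smul_eq_mul]
      ring
    · simp [hDh, indicator_of_notMem hz, wedge]
  obtain ⟨hint, hint0⟩ := integral_wedge_fderiv_eq_zero hS hd hc (hts.trans hkS) hL2 imCLM
    hf.differentiableOn fun k' => hf.dirichletEnergy_lt_top hK hS
  have hnonneg : 0 ≤ k.indicator fun z => g z * (fderiv ℝ f z).det :=
    indicator_nonneg fun z hz => mul_nonneg (hg0 z hz) (hf.det_nonneg hK (hkS hz))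
  rw [hdet] at hint hint0
  refine eq_zero_of_fderiv_ae_eq_zero (μ := volume) hd hc ?_
  filter_upwards [(integral_eq_zero_iff_of_nonneg hnonneg hint).1 hint0] with z hz
  rw [hDh]
  refine indicator_apply_eq_zero.2 fun hzk => ?_
  rw [indicator_of_mem hzk] at hz
  rcases mul_eq_zero.1 hz with hgz | hdet0
  · rw [hgz, zero_smul]
  · rw [hf.fderiv_eq_zero_of_det_eq_zero (hkS hzk) hdet0, ContinuousLinearMap.comp_zero, smul_zero]

theorem IsQuasiregularOn.re_le_of_frontier_re_le {k : Set ℂ} (hK : 0 < K) (hS : IsOpen S)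
    (hf : IsQuasiregularOn K f S) (hk : IsCompact k) (hkS : k ⊆ S)
    (hM : ∀ z ∈ frontier k, (f z).re ≤ M) : ∀ z ∈ k, (f z).re ≤ M := by
  have hre : ∀ z ∈ k, HasFDerivAt (fun z => (f z).re) (reCLM.comp (fderiv ℝ f z)) z :=
    fun z hz => hasFDerivAt_clm_comp reCLM (hf z (hkS hz)).1
  have hre_cont : ContinuousOn (fun z => (f z).re) k := fun z hz =>
    (hre z hz).continuousAt.continuousWithinAt
  have hcont : ContinuousOn (fun z => 2 * max ((f z).re - M) 0) k := by fun_prop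
  have hzero : (k.indicator fun z => max ((f z).re - M) 0 ^ 2) = 0 := by
    refine hf.eq_zero_of_hasFDerivAt_smul_fderiv_re hK hS hk hkS hcont
      (fun z _ => by positivity) support_indicator_subset fun z => ?_
    refine (hasFDerivAt_indicator_max_sub_zero_sq hk.isClosed
      (fun z hz => (hre z hz).differentiableAt) hM z).congr_fderiv ?_
    exact congrFun (indicator_congr fun w hw => by rw [(hre w hw).fderiv]) z
  intro z hz
  have hmax : max ((f z).re - M) 0 ^ 2 = 0 := by
    simpa only [indicator_of_mem hz, Pi.zero_apply] using congrFun hzero z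
  exact sub_nonpos.1 (max_eq_right_iff.1 (pow_eq_zero_iff two_ne_zero |>.1 hmax))

theorem det_smul_clm (a : ℂ) (L : ℂ →L[ℝ] ℂ) : (a • L).det = ‖a‖ ^ 2 * L.det := by
  rw [det_eq_wedge, det_eq_wedge, ← normSq_eq_norm_sq, normSq_apply]
  simp only [wedge, ContinuousLinearMap.comp_apply, smul_apply, smul_eq_mul, reCLM_apply, mul_re,
    imCLM_apply, mul_im]
  ring

theorem IsQuasiregularOn.of_hasFDerivAt_smul {h : ℂ → ℂ} (hf : IsQuasiregularOn K f S)
    (hh : ∀ z ∈ S, ∃ a : ℂ, HasFDerivAt h (a • fderiv ℝ f z) z) : IsQuasiregularOn K h S := by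
  intro z hz
  obtain ⟨a, ha⟩ := hh z hz
  refine ⟨ha.differentiableAt, ?_⟩
  rw [ha.fderiv, norm_smul, mul_pow, det_smul_clm, mul_left_comm]
  gcongr
  exact (hf z hz).2

theorem IsQuasiregularOn.neg (hf : IsQuasiregularOn K f S) :
    IsQuasiregularOn K (fun z => -f z) S :=
  hf.of_hasFDerivAt_smul fun z hz =>
    ⟨-1, by simpa only [neg_one_smul] using (hf z hz).1.hasFDerivAt.fun_neg⟩

theorem IsQuasiregularOn.norm_sub_le_of_frontier_norm_sub_le {k : Set ℂ} {p : ℂ} (hK : 0 < K)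
    (hS : IsOpen S) (hf : IsQuasiregularOn K f S) (hk : IsCompact k) (hkS : k ⊆ S)
    (hM : ∀ z ∈ frontier k, ‖f z - p‖ ≤ M) : ∀ z ∈ k, ‖f z - p‖ ≤ M := by
  intro z hz
  set a : ℂ := conj (f z - p) / ‖f z - p‖ with ha
  have ha1 : ‖a‖ ≤ 1 := by
    rw [ha, norm_div, norm_conj, norm_real, norm_norm]
    exact div_self_le_one _
  have haf : IsQuasiregularOn K (fun z => a * (f z - p)) S := hf.of_hasFDerivAt_smul fun z hz =>
    ⟨a, ((hf z hz).1.hasFDerivAt.sub_const p).const_mul a⟩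
  have hre := haf.re_le_of_frontier_re_le hK hS hk hkS (M := M) (fun w hw => ?_) z hz
  · rwa [ha, div_mul_eq_mul_div, conj_mul', ← ofReal_pow, ← ofReal_div, ofReal_re, sq,
      mul_self_div_self] at hre
  · calc (a * (f w - p)).re ≤ ‖a‖ * ‖f w - p‖ := (re_le_norm _).trans_eq (norm_mul _ _)
      _ ≤ 1 * ‖f w - p‖ := by gcongr
      _ ≤ M := (one_mul _).trans_le (hM w hw)

theorem lintegral_circleMap_le {F : ℂ → ENNReal} (hF : Measurable F) {c : ℂ} {ρ R : ℝ}
    (hρ : 0 < ρ) :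
    ∫⁻ r in Ioo ρ R, ENNReal.ofReal r * ∫⁻ θ in Ioo (-Real.pi) Real.pi, F (circleMap c r θ) ≤
      ∫⁻ z in closedBall c R, F z := by
  let G : ℂ → ENNReal := (closedBall c R).indicator F
  have hG : Measurable G := hF.indicator measurableSet_closedBall
  have hFG : ∀ r ∈ Ioo ρ R, ∀ θ, F (circleMap c r θ) = G (circleMap c r θ) := fun r hr θ =>
    (indicator_of_mem (closedBall_subset_closedBall hr.2.le
      (circleMap_mem_closedBall c (hρ.trans hr.1).le θ)) F).symm
  have hcirc : Measurable fun p : ℝ × ℝ => circleMap c p.1 p.2 := by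
    unfold circleMap
    fun_prop
  calc _ = ∫⁻ r in Ioo ρ R, ∫⁻ θ in Ioo (-Real.pi) Real.pi,
          ENNReal.ofReal r * G (circleMap c r θ) := by
        refine setLIntegral_congr_fun measurableSet_Ioo fun r hr => ?_
        simp only [hFG r hr]
        rw [lintegral_const_mul' _ _ ENNReal.ofReal_ne_top]
    _ ≤ ∫⁻ r in Ioi 0, ∫⁻ θ in Ioo (-Real.pi) Real.pi, ENNReal.ofReal r * G (circleMap c r θ) :=
        lintegral_mono_set fun r hr => hρ.trans hr.1
    _ = ∫⁻ p in polarCoord.target, ENNReal.ofReal p.1 * G (circleMap c p.1 p.2) := by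
        rw [polarCoord_target, Measure.volume_eq_prod, ← Measure.prod_restrict, lintegral_prod]
        exact (measurable_fst.ennreal_ofReal.mul (hG.comp hcirc)).aemeasurable
    _ = ∫⁻ z, G (c + z) := by
        rw [← Complex.lintegral_comp_polarCoord_symm]
        simp only [smul_eq_mul, Complex.polarCoord_symm_apply, circleMap, exp_mul_I, ofReal_cos,
          ofReal_sin]
    _ = ∫⁻ z in closedBall c R, F z := by
        rw [lintegral_add_left_eq_self, lintegral_indicator measurableSet_closedBall]

-- Otherwise integrating against `dr / r` over the annulus gives at least `E`.
theorem exists_circleMap_lintegral_le {F : ℂ → ENNReal} (hF : Measurable F) {c : ℂ} {ρ R E : ℝ}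
    (hρ : 0 < ρ) (hρR : ρ < R) (hE : ∫⁻ z in closedBall c R, F z < ENNReal.ofReal E) :
    ∃ r ∈ Ioo ρ R,
      ENNReal.ofReal (r ^ 2) * ∫⁻ θ in Ioo (-Real.pi) Real.pi, F (circleMap c r θ) ≤
        ENNReal.ofReal (E / Real.log (R / ρ)) := by
  by_contra! hcon
  have hlog : 0 < Real.log (R / ρ) := Real.log_pos ((one_lt_div hρ).2 hρR)
  have hE0 : 0 < E := ENNReal.ofReal_pos.1 (bot_le.trans_lt hE)
  have hint : IntegrableOn (fun r : ℝ => E / Real.log (R / ρ) * r⁻¹) (Ioo ρ R) := by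
    refine (ContinuousOn.integrableOn_Icc ?_).mono_set Ioo_subset_Icc_self
    exact continuousOn_const.mul (continuousOn_id.inv₀ fun r hr => (hρ.trans_le hr.1).ne')
  have hinv : ∫⁻ r in Ioo ρ R, ENNReal.ofReal (E / Real.log (R / ρ) * r⁻¹) =
      ENNReal.ofReal E := by
    rw [← ofReal_integral_eq_lintegral_ofReal hint, ← integral_Ioc_eq_integral_Ioo,
      ← intervalIntegral.integral_of_le hρR.le, intervalIntegral.integral_const_mul,
      integral_inv_of_pos hρ (hρ.trans hρR), div_mul_cancel₀ _ hlog.ne']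
    filter_upwards [ae_restrict_mem measurableSet_Ioo] with r hr
    have hr0 : 0 < r := hρ.trans hr.1
    exact (by positivity : 0 ≤ E / Real.log (R / ρ) * r⁻¹)
  refine hE.not_ge ((hinv.symm.trans_le ?_).trans (lintegral_circleMap_le hF hρ))
  refine setLIntegral_mono' measurableSet_Ioo fun r hr => ?_
  have hr0 : 0 < r := hρ.trans hr.1
  calc ENNReal.ofReal (E / Real.log (R / ρ) * r⁻¹)
      = ENNReal.ofReal r⁻¹ * ENNReal.ofReal (E / Real.log (R / ρ)) := by
        rw [mul_comm, ENNReal.ofReal_mul (by positivity)]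
    _ ≤ ENNReal.ofReal r⁻¹ * (ENNReal.ofReal (r ^ 2) *
          ∫⁻ θ in Ioo (-Real.pi) Real.pi, F (circleMap c r θ)) := by
        gcongr
        exact (hcon r hr).le
    _ = _ := by
        rw [← mul_assoc, ← ENNReal.ofReal_mul (by positivity), sq, inv_mul_cancel_left₀ hr0.ne']

theorem norm_sub_le_of_lintegral_sq_enorm_deriv_le {V : Type*} [NormedAddCommGroup V]
    [NormedSpace ℝ V] [CompleteSpace V] {γ : ℝ → V} {a b τ : ℝ} (hτ : 0 ≤ τ)
    (hγ : ∀ t ∈ Icc a b, DifferentiableAt ℝ γ t)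
    (hE : ∫⁻ t in Ioc a b, ‖deriv γ t‖ₑ ^ 2 ≤ ENNReal.ofReal (τ ^ 2)) :
    ∀ t ∈ Icc a b, ‖γ t - γ a‖ ≤ √(b - a) * τ := by
  intro t ht
  have hL1 : ∫⁻ s in Ioc a t, ‖deriv γ s‖ₑ ≤ ENNReal.ofReal (√(b - a) * τ) := by
    calc ∫⁻ s in Ioc a t, ‖deriv γ s‖ₑ
        ≤ ∫⁻ s in Ioc a b, ‖deriv γ s‖ₑ := lintegral_mono_set (Ioc_subset_Ioc_right ht.2)
      _ ≤ (∫⁻ s in Ioc a b, ‖deriv γ s‖ₑ ^ (2 : ℝ)) ^ (2 : ℝ)⁻¹ *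
            (∫⁻ _ in Ioc a b, 1 ^ (2 : ℝ)) ^ (2 : ℝ)⁻¹ := by
          simpa using ENNReal.lintegral_mul_le_Lp_mul_Lq (volume.restrict (Ioc a b))
            Real.HolderConjugate.two_two (stronglyMeasurable_deriv γ).enorm.aemeasurable
            (aemeasurable_const (b := 1))
      _ ≤ ENNReal.ofReal τ * ENNReal.ofReal √(b - a) := by
          gcongr
          · rw [ENNReal.rpow_inv_le_iff two_pos, ENNReal.ofReal_rpow_of_nonneg hτ two_pos.le]
            simpa only [ENNReal.rpow_two, Real.rpow_two] using hE
          · rw [ENNReal.rpow_inv_le_iff two_pos,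
              ENNReal.ofReal_rpow_of_nonneg (Real.sqrt_nonneg _) two_pos.le, Real.rpow_two,
              Real.sq_sqrt (sub_nonneg.2 (ht.1.trans ht.2))]
            simp
      _ = ENNReal.ofReal (√(b - a) * τ) := by rw [mul_comm, ENNReal.ofReal_mul (by positivity)]
  have hint : IntervalIntegrable (deriv γ) volume a t := by
    rw [intervalIntegrable_iff_integrableOn_Ioc_of_le ht.1]
    exact ⟨(stronglyMeasurable_deriv γ).aestronglyMeasurable, hL1.trans_lt ENNReal.ofReal_lt_top⟩
  rw [← intervalIntegral.integral_deriv_eq_sub (fun s hs => hγ s ?_) hint,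
    intervalIntegral.integral_of_le ht.1, ← ENNReal.ofReal_le_ofReal_iff (by positivity),
    ofReal_norm]
  · exact (enorm_integral_le_lintegral_enorm _).trans hL1
  · rw [uIcc_of_le ht.1] at hs
    exact ⟨hs.1, hs.2.trans ht.2⟩

theorem norm_sub_le_of_lintegral_circleMap_le {V : Type*} [NormedAddCommGroup V] [NormedSpace ℝ V]
    [CompleteSpace V] {f : ℂ → V} {c : ℂ} {r τ : ℝ} (hr : 0 ≤ r) (hτ : 0 ≤ τ)
    (hf : ∀ z ∈ sphere c r, DifferentiableAt ℝ f z)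
    (hE : ENNReal.ofReal (r ^ 2) * ∫⁻ θ in Ioo (-Real.pi) Real.pi,
      ‖fderiv ℝ f (circleMap c r θ)‖ₑ ^ 2 ≤ ENNReal.ofReal (τ ^ 2)) :
    ∀ z ∈ sphere c r, ‖f z - f (circleMap c r (-Real.pi))‖ ≤ 3 * τ := by
  have hD : ∀ θ, HasDerivAt (fun θ => f (circleMap c r θ))
      (fderiv ℝ f (circleMap c r θ) (circleMap 0 r θ * I)) θ := fun θ =>
    (hf _ (circleMap_mem_sphere c hr θ)).hasFDerivAt.comp_hasDerivAt θ (hasDerivAt_circleMap c r θ)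
  have hDle : ∀ θ, ‖deriv (fun θ => f (circleMap c r θ)) θ‖ₑ ^ 2 ≤
      ENNReal.ofReal (r ^ 2) * ‖fderiv ℝ f (circleMap c r θ)‖ₑ ^ 2 := fun θ => by
    rw [(hD θ).deriv, ENNReal.ofReal_pow hr, ← mul_pow]
    gcongr
    refine (ContinuousLinearMap.le_opENorm _ _).trans_eq ?_
    rw [← ofReal_norm (circleMap 0 r θ * I), norm_mul, norm_I, mul_one, norm_circleMap_zero,
      abs_of_nonneg hr, mul_comm]
  have hEγ : ∫⁻ θ in Ioc (-Real.pi) Real.pi, ‖deriv (fun θ => f (circleMap c r θ)) θ‖ₑ ^ 2 ≤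
      ENNReal.ofReal (τ ^ 2) := by
    refine (lintegral_mono hDle).trans ?_
    rwa [lintegral_const_mul' _ _ ENNReal.ofReal_ne_top, ← restrict_Ioo_eq_restrict_Ioc]
  intro z hz
  have harg := arg_mem_Ioc (z - c)
  have hzarg : circleMap c r (arg (z - c)) = z := by
    rw [circleMap, ← mem_sphere_iff_norm.1 hz, norm_mul_exp_arg_mul_I, add_sub_cancel]
  have hosc := norm_sub_le_of_lintegral_sq_enorm_deriv_le hτ
    (fun θ _ => (hD θ).differentiableAt) hEγ (arg (z - c)) (Ioc_subset_Icc_self harg)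
  rw [hzarg] at hosc
  have hsqrt : √(Real.pi - -Real.pi) ≤ 3 := by
    rw [Real.sqrt_le_left (by norm_num)]
    linarith [Real.pi_lt_four]
  exact hosc.trans (mul_le_mul_of_nonneg_right hsqrt hτ)

theorem IsQuasiregularOn.norm_sub_le_of_dirichletEnergy_lt {c : ℂ} {ρ R E : ℝ} (hK : 0 < K)
    (hS : IsOpen S) (hf : IsQuasiregularOn K f S) (hRS : closedBall c R ⊆ S) (hρ : 0 < ρ)
    (hρR : ρ < R) (hE : dirichletEnergy f (closedBall c R) < ENNReal.ofReal E) :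
    ∀ z ∈ closedBall c ρ, ‖f z - f c‖ ≤ 6 * √(E / Real.log (R / ρ)) := by
  set τ := √(E / Real.log (R / ρ)) with hτ
  rw [dirichletEnergy, withDensity_apply'] at hE
  have hE0 : 0 < E := ENNReal.ofReal_pos.1 (bot_le.trans_lt hE)
  have hlog : 0 < Real.log (R / ρ) := Real.log_pos ((one_lt_div hρ).2 hρR)
  obtain ⟨r, hr, hrE⟩ := exists_circleMap_lintegral_le
    ((measurable_fderiv ℝ f).enorm.pow_const 2) hρ hρR hE
  rw [← Real.sq_sqrt (by positivity : 0 ≤ E / Real.log (R / ρ)), ← hτ] at hrE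
  have hr0 : 0 < r := hρ.trans hr.1
  have hrS : closedBall c r ⊆ S := (closedBall_subset_closedBall hr.2.le).trans hRS
  have hbdry := norm_sub_le_of_lintegral_circleMap_le hr0.le (Real.sqrt_nonneg _)
    (fun z hz => (hf z (hrS (sphere_subset_closedBall hz))).1) hrE
  rw [← frontier_closedBall c hr0.ne'] at hbdry
  have hdisc := hf.norm_sub_le_of_frontier_norm_sub_le hK hS (isCompact_closedBall c r) hrS hbdry
  intro z hz
  have hz' := hdisc z (closedBall_subset_closedBall hr.1.le hz)
  have hc := hdisc c (mem_closedBall_self hr0.le)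
  linarith [norm_sub_le_norm_sub_add_norm_sub (f z) (f (circleMap c r (-Real.pi))) (f c),
    norm_sub_rev (f c) (f (circleMap c r (-Real.pi)))]

theorem exists_radius_norm_sub_le_of_abs_im_sub_le {ε R : ℝ} (hK : 0 < K) (hε : 0 < ε)
    (hR : 0 < R) (M : ℝ) :
    ∃ r ∈ Ioc 0 R, ∀ {f : ℂ → ℂ} {c : ℂ} {b : ℝ}, IsQuasiregularOn K f (ball c R) →
      (∀ z ∈ ball c R, |(f z).im - b| ≤ M) → ∀ z ∈ closedBall c r, ‖f z - f c‖ ≤ ε := by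
  obtain ⟨A, hA, hCaccioppoli⟩ := exists_dirichletEnergy_closedBall_le_of_finite
  let E : ℝ := A * K ^ 2 * M ^ 2 + 1
  let T : ℝ := 36 * E / ε ^ 2
  have hE : 0 < E := by positivity
  have hT : 0 < T := by positivity
  have hlt : R / 4 * Real.exp (-T) < R / 4 :=
    mul_lt_of_lt_one_right (by positivity) (Real.exp_lt_one_iff.2 (neg_lt_zero.2 hT))
  refine ⟨R / 4 * Real.exp (-T), ⟨by positivity, by linarith⟩, fun {f c b} hf hM z hz => ?_⟩
  have hRR : closedBall c (R / 2) ⊆ ball c R := closedBall_subset_ball (by linarith)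
  have henergy : dirichletEnergy f (closedBall c (R / 4)) < ENNReal.ofReal E := by
    rw [show R / 4 = R / 2 / 2 by ring]
    refine (hCaccioppoli hK (half_pos hR) isOpen_ball hRR hf
      (fun k => hf.dirichletEnergy_lt_top hK isOpen_ball) hM).trans_lt ?_
    exact (ENNReal.ofReal_lt_ofReal_iff hE).2 (lt_add_one _)
  have hosc := hf.norm_sub_le_of_dirichletEnergy_lt hK isOpen_ball
    ((closedBall_subset_closedBall (by linarith)).trans hRR) (by positivity) hlt henergy z hz
  have hlog : Real.log (R / 4 / (R / 4 * Real.exp (-T))) = T := by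
    rw [div_mul_cancel_left₀ (by positivity), Real.exp_neg, inv_inv, Real.log_exp]
  have hET : E / T = (ε / 6) ^ 2 := by
    simp only [T]
    field_simp
    norm_num
  rw [hlog, hET, Real.sqrt_sq (by positivity)] at hosc
  linarith

theorem IsQuasiregularOn.clog (hf : IsQuasiregularOn K f S) (hs : ∀ z ∈ S, f z ∈ slitPlane) :
    IsQuasiregularOn K (fun z => log (f z)) S := by
  refine hf.of_hasFDerivAt_smul fun z hz => ⟨(f z)⁻¹, ?_⟩
  have hlog := (hasDerivAt_log (hs z hz)).hasFDerivAt.restrictScalars ℝ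
  refine (hlog.comp z (hf z hz).1.hasFDerivAt).congr_fderiv (ContinuousLinearMap.ext fun v => ?_)
  simp [mul_comm]

-- `log f` takes values in a strip of width `2π`.
theorem exists_radius_norm_le_of_mem_slitPlane {R : ℝ} (hK : 0 < K) (hR : 0 < R) :
    ∃ r ∈ Ioc 0 R, ∀ {f : ℂ → ℂ} {c : ℂ}, IsQuasiregularOn K f (ball c R) →
      (∀ z ∈ ball c R, f z ∈ slitPlane) → ∀ z ∈ ball c r, ‖f z‖ ≤ 3 * ‖f c‖ := by
  obtain ⟨r, hr, hosc⟩ := exists_radius_norm_sub_le_of_abs_im_sub_le hK one_pos hR Real.pi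
  refine ⟨r, hr, fun {f c} hf hs z hz => ?_⟩
  have hlog : ‖log (f z) - log (f c)‖ ≤ 1 := hosc (b := 0) (hf.clog hs)
    (fun w _ => by simpa only [sub_zero, log_im] using abs_arg_le_pi (f w)) z
    (ball_subset_closedBall hz)
  have hz0 : 0 < ‖f z‖ := norm_pos_iff.2 (slitPlane_ne_zero (hs z (ball_subset_ball hr.2 hz)))
  have hc0 : 0 < ‖f c‖ := norm_pos_iff.2 (slitPlane_ne_zero (hs c (mem_ball_self hR)))
  have hle : Real.log ‖f z‖ ≤ 1 + Real.log ‖f c‖ := by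
    have hre := (re_le_norm _).trans hlog
    rw [sub_re, log_re, log_re] at hre
    linarith
  rw [Real.log_le_iff_le_exp hz0, Real.exp_add, Real.exp_log hc0] at hle
  exact hle.trans (by gcongr; exact Real.exp_one_lt_three.le)

end PlanarMaps

section AlmostComplex

theorem im_conj_mul_apply_ne_zero {A : ℂ →L[ℝ] ℂ} (hA : ∀ a, A (A a) = -a) {a : ℂ}
    (ha : a ≠ 0) : (conj a * A a).im ≠ 0 := by
  intro h
  obtain ⟨t, ht⟩ : ∃ t : ℝ, A a = t • a := by
    refine ⟨(conj a * A a).re / ‖a‖ ^ 2, ?_⟩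
    have hreal : ((conj a * A a).re : ℂ) = conj a * A a := Complex.ext rfl (by simpa using h.symm)
    rw [real_smul, ofReal_div, hreal, ofReal_pow, ← conj_mul', mul_div_mul_left _ _
      ((map_ne_zero _).2 ha), div_mul_cancel₀ _ ha]
  have hsq : (t * t + 1) • a = 0 := by
    rw [add_smul, one_smul, mul_smul, ← ht, ← map_smul, ← ht, hA, neg_add_cancel]
  have ht0 : t * t + 1 = 0 := (smul_eq_zero.1 hsq).resolve_right ha
  linarith [mul_self_nonneg t]

-- `(conj a * j x a).im` never vanishes for `a ≠ 0`, so it keeps its sign on the connected set `Ω`.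
theorem exists_mul_sq_norm_le_im_conj_mul {X : Type*} [TopologicalSpace X] {Ω : Set X}
    (hΩ : IsCompact Ω) (hΩc : IsPreconnected Ω) {j : X → ℂ →L[ℝ] ℂ} (hj : ContinuousOn j Ω)
    (hj2 : ∀ x ∈ Ω, ∀ a, j x (j x a) = -a) {x₀ : X} (hx₀ : x₀ ∈ Ω)
    (hj0 : ∀ a, 0 ≤ (conj a * j x₀ a).im) :
    ∃ c > 0, ∀ x ∈ Ω, ∀ a, c * ‖a‖ ^ 2 ≤ (conj a * j x a).im := by
  have hcont : ContinuousOn (fun p : X × ℂ => (conj p.2 * j p.1 p.2).im)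
      (Ω ×ˢ sphere (0 : ℂ) 1) := by
    have hj1 : ContinuousOn (fun p : X × ℂ => j p.1) (Ω ×ˢ sphere (0 : ℂ) 1) :=
      hj.comp continuousOn_fst fun p hp => hp.1
    exact continuous_im.comp_continuousOn ((continuous_conj.comp_continuousOn continuousOn_snd).mul
      (hj1.clm_apply continuousOn_snd))
  have hpos : ∀ x ∈ Ω, ∀ a ∈ sphere (0 : ℂ) 1, 0 < (conj a * j x a).im := by
    intro x hx a ha
    by_contra! hneg
    obtain ⟨y, hy, hy0⟩ := hΩc.intermediate_value hx hx₀
      (hcont.comp (continuousOn_id.prodMk continuousOn_const) fun y hy => ⟨hy, ha⟩)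
      ⟨hneg, hj0 a⟩
    exact im_conj_mul_apply_ne_zero (hj2 y hy) (ne_of_mem_sphere ha one_ne_zero) hy0
  obtain ⟨p, hp, hmin⟩ := (hΩ.prod (isCompact_sphere (0 : ℂ) 1)).exists_isMinOn
    ⟨(x₀, 1), hx₀, by simp⟩ hcont
  refine ⟨_, hpos p.1 hp.1 p.2 hp.2, fun x hx a => ?_⟩
  rcases eq_or_ne a 0 with rfl | ha
  · simp
  have hunit : ‖a‖⁻¹ • a ∈ sphere (0 : ℂ) 1 := by
    simpa using norm_smul_inv_norm (𝕜 := ℝ) ha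
  have hscale : (conj (‖a‖⁻¹ • a) * j x (‖a‖⁻¹ • a)).im = (conj a * j x a).im / ‖a‖ ^ 2 := by
    rw [(j x).map_smul]
    simp only [real_smul, map_mul, conj_ofReal]
    rw [mul_mul_mul_comm, ← ofReal_mul, im_ofReal_mul]
    field_simp
  rw [← le_div_iff₀ (by positivity), ← hscale]
  exact hmin (show (x, ‖a‖⁻¹ • a) ∈ Ω ×ˢ sphere (0 : ℂ) 1 from ⟨hx, hunit⟩)

theorem mul_sq_norm_le_im_conj_mul_of_norm_sub_le {A B : ℂ →L[ℝ] ℂ} {c κ : ℝ}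
    (hB : ∀ a, c * ‖a‖ ^ 2 ≤ (conj a * B a).im) (hAB : ‖A - B‖ ≤ κ) (a : ℂ) :
    (c - κ) * ‖a‖ ^ 2 ≤ (conj a * A a).im := by
  have hsub : |(conj a * (A - B) a).im| ≤ κ * ‖a‖ ^ 2 := by
    calc |(conj a * (A - B) a).im| ≤ ‖a‖ * ‖(A - B) a‖ := by
          simpa using abs_im_le_norm (conj a * (A - B) a)
      _ ≤ ‖a‖ * (κ * ‖a‖) := by gcongr; exact (A - B).le_of_opNorm_le hAB a
      _ = κ * ‖a‖ ^ 2 := by ring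
  rw [_root_.sub_apply, mul_sub, sub_im] at hsub
  linarith [hB a, (abs_le.1 hsub).1]

theorem norm_le_norm_apply_one_add_norm_apply_I (L : ℂ →L[ℝ] ℂ) : ‖L‖ ≤ ‖L 1‖ + ‖L I‖ := by
  refine L.opNorm_le_bound (by positivity) fun z => ?_
  calc ‖L z‖ = ‖z.re • L 1 + z.im • L I‖ := by
        rw [← map_smul, ← map_smul, ← map_add, real_smul, real_smul, mul_one, re_add_im]
    _ ≤ |z.re| * ‖L 1‖ + |z.im| * ‖L I‖ := by
        simpa only [norm_smul, Real.norm_eq_abs] using norm_add_le (z.re • L 1) (z.im • L I)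
    _ ≤ ‖z‖ * ‖L 1‖ + ‖z‖ * ‖L I‖ := by
        gcongr
        exacts [abs_re_le_norm z, abs_im_le_norm z]
    _ = (‖L 1‖ + ‖L I‖) * ‖z‖ := by ring

theorem sq_norm_le_mul_det_of_apply_I_eq {A L : ℂ →L[ℝ] ℂ} {c N : ℝ} (hc : 0 < c)
    (hA : ∀ a, c * ‖a‖ ^ 2 ≤ (conj a * A a).im) (hN : ‖A‖ ≤ N) (hL : L I = A (L 1)) :
    ‖L‖ ^ 2 ≤ (1 + N) ^ 2 / c * L.det := by
  have hdet : L.det = (conj (L 1) * L I).im := by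
    rw [det_eq_wedge]
    simp only [wedge, ContinuousLinearMap.comp_apply, reCLM_apply, imCLM_apply, mul_im, conj_re,
      conj_im, neg_mul]
    ring
  have hnorm : ‖L‖ ≤ (1 + N) * ‖L 1‖ := by
    rw [one_add_mul]
    exact (norm_le_norm_apply_one_add_norm_apply_I L).trans
      (by gcongr; exact hL ▸ A.le_of_opNorm_le hN (L 1))
  calc ‖L‖ ^ 2 ≤ ((1 + N) * ‖L 1‖) ^ 2 := by gcongr
    _ = (1 + N) ^ 2 / c * (c * ‖L 1‖ ^ 2) := by field_simp
    _ ≤ (1 + N) ^ 2 / c * L.det := by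
        rw [hdet, hL]
        gcongr
        exact hA (L 1)

/-- For a functional `π` and a vector `e` with `π e = 1`, the endomorphism `a ↦ π (A (a • e))` of
`ℂ`. If `A` preserves `ker π`, it is the endomorphism that `A` induces on `F ⧸ ker π ≃ ℂ`. -/
def inducedEnd (π : F →L[ℂ] ℂ) (e : F) : (F →L[ℝ] F) →L[ℝ] ℂ →L[ℝ] ℂ :=
  (ContinuousLinearMap.compL ℝ ℂ F ℂ (π.restrictScalars ℝ)).comp
    ((ContinuousLinearMap.compL ℝ ℂ F F).flip
      ((ContinuousLinearMap.toSpanSingleton ℂ e).restrictScalars ℝ))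

theorem inducedEnd_apply (π : F →L[ℂ] ℂ) (e : F) (A : F →L[ℝ] F) (a : ℂ) :
    inducedEnd π e A a = π (A (a • e)) := rfl

theorem inducedEnd_apply_apply {π : F →L[ℂ] ℂ} {e : F} (he : π e = 1) {A : F →L[ℝ] F}
    (hA : ∀ w, π w = 0 → π (A w) = 0) (w : F) : inducedEnd π e A (π w) = π (A w) := by
  have hker : π (A (w - π w • e)) = 0 := hA _ (by simp [he])
  rw [inducedEnd_apply, eq_comm, ← sub_eq_zero, ← map_sub, ← map_sub, hker]

theorem exists_mul_sq_norm_le_im_conj_mul_inducedEnd {Ω : Set F} (hΩ : IsCompact Ω)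
    (hΩc : IsPreconnected Ω) {J : F → F →L[ℝ] F} (hJ : ContinuousOn J Ω)
    (hJ2 : ∀ z ∈ Ω, (J z).comp (J z) = -ContinuousLinearMap.id ℝ F) {z₀ : F} (hz₀ : z₀ ∈ Ω)
    (hJ0 : J z₀ = Jst F) {π : F →L[ℂ] ℂ} {e : F} (he : π e = 1)
    (hπJ : ∀ z ∈ Ω, ∀ w, π w = 0 → π (J z w) = 0) :
    ∃ c > 0, ∀ z ∈ Ω, ∀ a, c * ‖a‖ ^ 2 ≤ (conj a * inducedEnd π e (J z) a).im := by
  refine exists_mul_sq_norm_le_im_conj_mul hΩ hΩc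
    ((inducedEnd π e).continuous.comp_continuousOn hJ) (fun z hz a => ?_) hz₀ fun a => ?_
  · rw [inducedEnd_apply π e (J z) a, inducedEnd_apply_apply he (hπJ z hz),
      ← ContinuousLinearMap.comp_apply, hJ2 z hz]
    simp [he]
  · have hJst : conj a * inducedEnd π e (Jst F) a = I * (‖a‖ ^ 2 : ℝ) := by
      rw [ofReal_pow, ← conj_mul', mul_left_comm]
      simp [inducedEnd_apply, Jst, he]
    rw [hJ0, hJst, I_mul_im, ofReal_re]
    positivity

theorem IsJDisc.isQuasiregularOn {Ω : Set F} {J : F → F →L[ℝ] F} {g : ℂ → F} {π : F →L[ℂ] ℂ}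
    {e : F} {c N : ℝ} (hg : IsJDisc J Ω g) (he : π e = 1)
    (hπJ : ∀ z ∈ Ω, ∀ w, π w = 0 → π (J z w) = 0) (hc : 0 < c)
    (hcoercive : ∀ z ∈ Ω, ∀ a, c * ‖a‖ ^ 2 ≤ (conj a * inducedEnd π e (J z) a).im)
    (hN : ∀ z ∈ Ω, ‖inducedEnd π e (J z)‖ ≤ N) :
    IsQuasiregularOn ((1 + N) ^ 2 / c) (fun ζ => π (g ζ)) (ball 0 1) := by
  intro ζ hζ
  have hgζ := hg.1 hζ
  obtain ⟨hd, hhol⟩ := hg.2 ζ hζ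
  have hD : HasFDerivAt (fun ζ => π (g ζ)) ((π.restrictScalars ℝ).comp (fderiv ℝ g ζ)) ζ :=
    (π.restrictScalars ℝ).hasFDerivAt.comp ζ hd.hasFDerivAt
  have hDI : fderiv ℝ g ζ I = J (g ζ) (fderiv ℝ g ζ 1) := by
    simpa [Jst] using DFunLike.congr_fun hhol 1
  refine ⟨hD.differentiableAt, ?_⟩
  rw [hD.fderiv]
  refine sq_norm_le_mul_det_of_apply_I_eq hc (hcoercive _ hgζ) (hN _ hgζ) ?_
  simp only [ContinuousLinearMap.comp_apply, ContinuousLinearMap.coe_restrictScalars', hDI]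
  rw [inducedEnd_apply_apply he (hπJ _ hgζ)]

theorem exists_isQuasiregularOn_of_isJDisc {Ω : Set F} (hΩ : IsCompact Ω)
    (hΩc : IsPreconnected Ω) {J : F → F →L[ℝ] F} (hJ : ContinuousOn J Ω)
    (hJ2 : ∀ z ∈ Ω, (J z).comp (J z) = -ContinuousLinearMap.id ℝ F) {z₀ : F} (hz₀ : z₀ ∈ Ω)
    (hJ0 : J z₀ = Jst F) {π : F →L[ℂ] ℂ} {e : F} (he : π e = 1)
    (hπJ : ∀ z ∈ Ω, ∀ w, π w = 0 → π (J z w) = 0) :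
    ∃ κ > 0, ∃ K > 0, ∀ {J' : F → F →L[ℝ] F}, (∀ z ∈ Ω, ∀ w, π w = 0 → π (J' z w) = 0) →
      (∀ z ∈ Ω, ‖J' z - J z‖ ≤ κ) → ∀ {g : ℂ → F}, IsJDisc J' Ω g →
        IsQuasiregularOn K (fun ζ => π (g ζ)) (ball 0 1) := by
  obtain ⟨c, hc, hcoercive⟩ :=
    exists_mul_sq_norm_le_im_conj_mul_inducedEnd hΩ hΩc hJ hJ2 hz₀ hJ0 he hπJ
  obtain ⟨N, hN⟩ := hΩ.exists_bound_of_continuousOn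
    ((inducedEnd π e).continuous.comp_continuousOn hJ)
  have hN0 : 0 ≤ N := (norm_nonneg _).trans (hN z₀ hz₀)
  let P : ℝ := ‖inducedEnd π e‖ + 1
  have hP : 0 < P := by positivity
  refine ⟨c / 2 / P, by positivity, (1 + (N + c / 2)) ^ 2 / (c - c / 2),
    div_pos (by positivity) (by linarith), fun {J'} hπJ' hJ' {g} hg => ?_⟩
  have hclose : ∀ z ∈ Ω, ‖inducedEnd π e (J' z) - inducedEnd π e (J z)‖ ≤ c / 2 := by
    intro z hz
    rw [← map_sub]
    calc _ ≤ P * (c / 2 / P) := (inducedEnd π e).le_of_opNorm_le_of_le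
          (le_add_of_nonneg_right zero_le_one) (hJ' z hz)
      _ = c / 2 := mul_div_cancel₀ _ hP.ne'
  exact hg.isQuasiregularOn he hπJ' (by linarith)
    (fun z hz => mul_sq_norm_le_im_conj_mul_of_norm_sub_le (hcoercive z hz) (hclose z hz))
    fun z hz => (norm_le_norm_add_norm_sub' _ _).trans (add_le_add (hN z hz) (hclose z hz))

end AlmostComplex

section Splitting

/-- `A` maps each factor of the splitting `ℂ × ℂ` into itself. -/
def PreservesFactors (A : ℂ × ℂ →L[ℝ] ℂ × ℂ) : Prop :=
  ∀ w : ℂ × ℂ, (A (w.1, 0)).2 = 0 ∧ (A (0, w.2)).1 = 0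

theorem PreservesFactors.fst_apply_eq_zero {A : ℂ × ℂ →L[ℝ] ℂ × ℂ} (hA : PreservesFactors A)
    {w : ℂ × ℂ} (hw : w.1 = 0) : (A w).1 = 0 := by
  simpa only [← hw] using (hA w).2

theorem PreservesFactors.snd_apply_eq_zero {A : ℂ × ℂ →L[ℝ] ℂ × ℂ} (hA : PreservesFactors A)
    {w : ℂ × ℂ} (hw : w.2 = 0) : (A w).2 = 0 := by
  simpa only [← hw] using (hA w).1

theorem exists_isQuasiregularOn_fst_and_snd {Ω : Set (ℂ × ℂ)} (hΩ : IsCompact Ω)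
    (hΩc : IsPreconnected Ω) {J : ℂ × ℂ → ℂ × ℂ →L[ℝ] ℂ × ℂ} (hJ : ContinuousOn J Ω)
    (hJ2 : ∀ z ∈ Ω, (J z).comp (J z) = -ContinuousLinearMap.id ℝ (ℂ × ℂ))
    (hsplit : ∀ z ∈ Ω, PreservesFactors (J z)) {z₀ : ℂ × ℂ} (hz₀ : z₀ ∈ Ω)
    (hJ0 : J z₀ = Jst (ℂ × ℂ)) :
    ∃ κ > 0, ∃ K > 0, ∀ {J' : ℂ × ℂ → ℂ × ℂ →L[ℝ] ℂ × ℂ}, (∀ z ∈ Ω, PreservesFactors (J' z)) →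
      (∀ z ∈ Ω, ‖J' z - J z‖ ≤ κ) → ∀ {g : ℂ → ℂ × ℂ}, IsJDisc J' Ω g →
        IsQuasiregularOn K (fun ζ => (g ζ).1) (ball 0 1) ∧
          IsQuasiregularOn K (fun ζ => (g ζ).2) (ball 0 1) := by
  obtain ⟨κ₁, hκ₁, K₁, hK₁, hfst⟩ := exists_isQuasiregularOn_of_isJDisc hΩ hΩc hJ hJ2 hz₀ hJ0
    (π := ContinuousLinearMap.fst ℂ ℂ ℂ) (e := (1, 0)) rfl
    fun z hz w hw => (hsplit z hz).fst_apply_eq_zero hw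
  obtain ⟨κ₂, hκ₂, K₂, hK₂, hsnd⟩ := exists_isQuasiregularOn_of_isJDisc hΩ hΩc hJ hJ2 hz₀ hJ0
    (π := ContinuousLinearMap.snd ℂ ℂ ℂ) (e := (0, 1)) rfl
    fun z hz w hw => (hsplit z hz).snd_apply_eq_zero hw
  refine ⟨min κ₁ κ₂, lt_min hκ₁ hκ₂, max K₁ K₂, lt_max_of_lt_left hK₁,
    fun {J'} hsplit' hJ' {g} hg => ⟨?_, ?_⟩⟩
  · exact (hfst (fun z hz w hw => (hsplit' z hz).fst_apply_eq_zero hw)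
      (fun z hz => (hJ' z hz).trans (min_le_left _ _)) hg).mono hK₁ (le_max_left _ _) Subset.rfl
  · exact (hsnd (fun z hz w hw => (hsplit' z hz).snd_apply_eq_zero hw)
      (fun z hz => (hJ' z hz).trans (min_le_right _ _)) hg).mono hK₂ (le_max_right _ _) Subset.rfl

end Splitting

section TangentDomain

variable {C r : ℝ} {z : ℂ × ℂ}

-- Since `‖z‖² ≤ ‖z.1‖² + ‖z.2‖`, the error term is absorbed by `‖z.1‖²` and `‖z.2‖`.
theorem re_snd_add_sq_norm_fst_lt (hz : ‖z‖ ≤ 1) (hCz : C * ‖z‖ ≤ 1 / 8) (hr : r < 0)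
    (hform : |r - (z.2.re + ‖z.1‖ ^ 2)| ≤ C * (‖z.2‖ * ‖z‖ + ‖z‖ ^ 3)) :
    z.2.re + 7 / 8 * ‖z.1‖ ^ 2 < 1 / 4 * ‖z.2‖ := by
  have hsq : ‖z‖ ^ 2 ≤ ‖z.1‖ ^ 2 + ‖z.2‖ := by
    have hz2 : ‖z.2‖ ^ 2 ≤ ‖z.2‖ :=
      pow_le_of_le_one (norm_nonneg _) ((norm_snd_le z).trans hz) two_ne_zero
    rcases max_choice ‖z.1‖ ‖z.2‖ with h | h <;> rw [Prod.norm_def, h]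
    · exact le_add_of_nonneg_right (norm_nonneg _)
    · exact hz2.trans (le_add_of_nonneg_left (sq_nonneg _))
  have herror : C * (‖z.2‖ * ‖z‖ + ‖z‖ ^ 3) ≤ 1 / 8 * (2 * ‖z.2‖ + ‖z.1‖ ^ 2) := by
    calc C * (‖z.2‖ * ‖z‖ + ‖z‖ ^ 3) = C * ‖z‖ * (‖z.2‖ + ‖z‖ ^ 2) := by ring
      _ ≤ 1 / 8 * (‖z.2‖ + (‖z.1‖ ^ 2 + ‖z.2‖)) := by gcongr
      _ = 1 / 8 * (2 * ‖z.2‖ + ‖z.1‖ ^ 2) := by ring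
  linarith [(abs_le.1 hform).1]

theorem neg_snd_mem_slitPlane (h : z.2.re + 7 / 8 * ‖z.1‖ ^ 2 < 1 / 4 * ‖z.2‖) :
    -z.2 ∈ slitPlane := by
  rw [mem_slitPlane_iff, neg_re, neg_im, neg_ne_zero, or_iff_not_imp_right, not_ne_iff]
  intro him
  have hnorm : ‖z.2‖ ≤ |z.2.re| := by simpa [him] using norm_le_abs_re_add_abs_im z.2
  by_contra! hre
  rw [abs_of_nonneg (neg_nonpos.1 hre)] at hnorm
  linarith [sq_nonneg ‖z.1‖]

theorem sq_norm_fst_le (h : z.2.re + 7 / 8 * ‖z.1‖ ^ 2 < 1 / 4 * ‖z.2‖) :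
    ‖z.1‖ ^ 2 ≤ 2 * ‖z.2‖ := by
  linarith [(abs_le.1 (abs_re_le_norm z.2)).1, norm_nonneg z.2]

end TangentDomain

section Discs

theorem exists_radius_norm_le_of_isQuasiregularOn {K η : ℝ} (hK : 0 < K) (hη : 0 < η) :
    ∃ r ∈ Ioc (0 : ℝ) 1, ∀ {g : ℂ → ℂ × ℂ}, MapsTo g (ball 0 1) (closedBall 0 1) →
      IsQuasiregularOn K (fun ζ => (g ζ).1) (ball 0 1) →
      IsQuasiregularOn K (fun ζ => (g ζ).2) (ball 0 1) →
      ‖g 0‖ ≤ η → ∀ ζ ∈ ball (0 : ℂ) r, ‖g ζ‖ ≤ 2 * η := by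
  obtain ⟨r, hr, hosc⟩ := exists_radius_norm_sub_le_of_abs_im_sub_le hK hη one_pos 1
  refine ⟨r, hr, fun {g} hg h1 h2 h0 ζ hζ => ?_⟩
  have hbound : ∀ w ∈ ball (0 : ℂ) 1, ‖g w‖ ≤ 1 := fun w hw => mem_closedBall_zero_iff.1 (hg hw)
  have hζ' := ball_subset_closedBall hζ
  have hsub : ‖g ζ - g 0‖ ≤ η := by
    refine max_le (hosc (b := 0) h1 (fun w hw => ?_) ζ hζ')
      (hosc (b := 0) h2 (fun w hw => ?_) ζ hζ') <;> rw [sub_zero]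
    · exact (abs_im_le_norm _).trans ((norm_fst_le _).trans (hbound w hw))
    · exact (abs_im_le_norm _).trans ((norm_snd_le _).trans (hbound w hw))
  linarith [norm_le_norm_add_norm_sub' (g ζ) (g 0)]

theorem exists_radius_norm_le_of_tangentDomain {C K : ℝ} (hC : 0 ≤ C) (hK : 0 < K) :
    ∃ η ∈ Ioc (0 : ℝ) 1, ∃ r₀ > 0, ∀ {ρ : ℂ × ℂ → ℝ},
      (∀ z ∈ closedBall (0 : ℂ × ℂ) 1,
        |ρ z - (z.2.re + ‖z.1‖ ^ 2)| ≤ C * (‖z.2‖ * ‖z‖ + ‖z‖ ^ 3)) →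
      ∀ {g : ℂ → ℂ × ℂ}, MapsTo g (ball 0 1) {z ∈ ball 0 1 | ρ z < 0} →
      IsQuasiregularOn K (fun ζ => (g ζ).1) (ball 0 1) →
      IsQuasiregularOn K (fun ζ => (g ζ).2) (ball 0 1) → ‖g 0‖ ≤ η →
      ∀ ζ ∈ ball (0 : ℂ) r₀, ‖(g ζ).1‖ ^ 2 ≤ 2 * ‖(g ζ).2‖ ∧ ‖(g ζ).2‖ ≤ 3 * ‖(g 0).2‖ := by
  let η : ℝ := 1 / (16 * C + 2)
  have hη : 0 < η := by positivity
  have hη1 : 2 * η ≤ 1 := by rw [mul_one_div, div_le_one] <;> linarith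
  have hCη : C * (2 * η) ≤ 1 / 8 := by
    rw [mul_one_div, mul_div_assoc', div_le_div_iff₀] <;> linarith
  obtain ⟨r₁, hr₁, hsmall⟩ := exists_radius_norm_le_of_isQuasiregularOn hK hη
  obtain ⟨r₂, hr₂, hslit⟩ := exists_radius_norm_le_of_mem_slitPlane hK hr₁.1
  refine ⟨η, ⟨hη, by linarith⟩, r₂, hr₂.1, fun {ρ} hform {g} hg h1 h2 h0 ζ hζ => ?_⟩
  have htangent : ∀ w ∈ ball (0 : ℂ) r₁,
      (g w).2.re + 7 / 8 * ‖(g w).1‖ ^ 2 < 1 / 4 * ‖(g w).2‖ := by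
    intro w hw
    have hgw := hg (ball_subset_ball hr₁.2 hw)
    have hle := hsmall (fun w hw => ball_subset_closedBall (hg hw).1) h1 h2 h0 w hw
    exact re_snd_add_sq_norm_fst_lt (hle.trans hη1)
      ((mul_le_mul_of_nonneg_left hle hC).trans hCη) hgw.2
      (hform _ (ball_subset_closedBall hgw.1))
  refine ⟨sq_norm_fst_le (htangent ζ (ball_subset_ball hr₂.2 hζ)), ?_⟩
  have hneg : IsQuasiregularOn K (fun w => -(g w).2) (ball 0 r₁) :=
    (h2.mono hK le_rfl (ball_subset_ball hr₁.2)).neg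
  simpa only [norm_neg] using hslit hneg (fun w hw => neg_snd_mem_slitPlane (htangent w hw)) ζ hζ

end Discs

theorem norm_sub_le_c2Dist {G : Type*} [NormedAddCommGroup G] [NormedSpace ℝ G] {f h : E → G}
    {Ω W : Set E} (hW : IsOpen W) (hΩ : IsCompact Ω) (hΩW : Ω ⊆ W) (hf : ContDiffOn ℝ 2 f W)
    (hh : ContDiffOn ℝ 2 h W) {z : E} (hz : z ∈ Ω) : ‖f z - h z‖ ≤ c2Dist f h Ω := by
  have hcont : ∀ {k : E → G}, ContDiffOn ℝ 2 k W →
      ContinuousOn k Ω ∧ ContinuousOn (fderiv ℝ k) Ω ∧ ContinuousOn (fderiv ℝ (fderiv ℝ k)) Ω := by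
    intro k hk
    have hk' : ContDiffOn ℝ 1 (fderiv ℝ k) W := hk.fderiv_of_isOpen hW one_add_one_eq_two.le
    exact ⟨hk.continuousOn.mono hΩW, hk'.continuousOn.mono hΩW,
      (hk'.continuousOn_fderiv_of_isOpen hW le_rfl).mono hΩW⟩
  obtain ⟨hf0, hf1, hf2⟩ := hcont hf
  obtain ⟨hh0, hh1, hh2⟩ := hcont hh
  have hmax : ContinuousOn (fun x => max ‖f x - h x‖ (max ‖fderiv ℝ f x - fderiv ℝ h x‖
      ‖fderiv ℝ (fderiv ℝ f) x - fderiv ℝ (fderiv ℝ h) x‖)) Ω :=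
    (hf0.sub hh0).norm.sup ((hf1.sub hh1).norm.sup
      (ContinuousOn.norm (E := E →L[ℝ] E →L[ℝ] G) (hf2.sub hh2)))
  have hbdd := hΩ.bddAbove_image hmax
  rw [image_eq_range] at hbdd
  exact (le_max_left _ _).trans (le_ciSup hbdd ⟨z, hz⟩)

theorem tendstoUniformlyOn_of_tendsto_c2Dist {ι G : Type*} {l : Filter ι} [NormedAddCommGroup G]
    [NormedSpace ℝ G] {f : ι → E → G} {h : E → G} {Ω W : Set E} (hW : IsOpen W)
    (hΩ : IsCompact Ω) (hΩW : Ω ⊆ W) (hf : ∀ i, ContDiffOn ℝ 2 (f i) W) (hh : ContDiffOn ℝ 2 h W)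
    (hlim : Tendsto (fun i => c2Dist (f i) h Ω) l (𝓝 0)) : TendstoUniformlyOn f h l Ω := by
  rw [Metric.tendstoUniformlyOn_iff]
  intro ε hε
  filter_upwards [hlim.eventually (gt_mem_nhds hε)] with i hi z hz
  rw [dist_comm, dist_eq_norm]
  exact (norm_sub_le_c2Dist hW hΩ hΩW (hf i) hh hz).trans_lt hi

theorem statement12_general {ι : Type*} {l : Filter ι} {C : ℝ} (hC : 0 ≤ C)
    {ρ : ι → ℂ × ℂ → ℝ}
    (hform : ∀ i, ∀ z ∈ closedBall (0 : ℂ × ℂ) 1,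
      |ρ i z - (z.2.re + ‖z.1‖ ^ 2)| ≤ C * (‖z.2‖ * ‖z‖ + ‖z‖ ^ 3))
    {J : ℂ × ℂ → ℂ × ℂ →L[ℝ] ℂ × ℂ} {J' : ι → ℂ × ℂ → ℂ × ℂ →L[ℝ] ℂ × ℂ}
    (hJ : ContinuousOn J (closedBall 0 1))
    (hJ2 : ∀ z ∈ closedBall (0 : ℂ × ℂ) 1, (J z).comp (J z) = -ContinuousLinearMap.id ℝ (ℂ × ℂ))
    (hsplit : ∀ z ∈ closedBall (0 : ℂ × ℂ) 1, PreservesFactors (J z))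
    (hsplit' : ∀ i, ∀ z ∈ closedBall (0 : ℂ × ℂ) 1, PreservesFactors (J' i z))
    (hJ0 : J 0 = Jst (ℂ × ℂ)) (hlim : TendstoUniformlyOn J' J l (closedBall 0 1)) :
    ∃ C₀ > 0, ∃ δ₀ > 0, ∃ r₀ > 0, ∀ᶠ i in l, ∀ δ : ℝ, 0 < δ → δ < δ₀ → ∀ g : ℂ → ℂ × ℂ,
      IsJDisc (J' i) {z ∈ ball (0 : ℂ × ℂ) 1 | ρ i z < 0} g →
        ‖(g 0).1‖ < Real.sqrt δ → ‖(g 0).2‖ < δ →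
        ∀ ζ : ℂ, ‖ζ‖ < r₀ →
          ‖(g ζ).1‖ < Real.sqrt (C₀ * δ) ∧ ‖(g ζ).2‖ < C₀ * δ := by
  obtain ⟨κ, hκ, K, hK, hqr⟩ := exists_isQuasiregularOn_fst_and_snd (isCompact_closedBall 0 1)
    (convex_closedBall 0 1).isPreconnected hJ hJ2 hsplit (mem_closedBall_self zero_le_one) hJ0
  obtain ⟨η, ⟨hη, hη1⟩, r₀, hr₀, hschwarz⟩ := exists_radius_norm_le_of_tangentDomain hC hK
  refine ⟨6, by norm_num, η ^ 2, by positivity, r₀, hr₀, ?_⟩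
  filter_upwards [Metric.tendstoUniformlyOn_iff.1 hlim κ hκ]
    with i hi δ hδ hδη g ⟨hg, hhol⟩ hg1 hg2 ζ hζ
  obtain ⟨h1, h2⟩ := hqr (hsplit' i)
    (fun z hz => by rw [← dist_eq_norm, dist_comm]; exact (hi z hz).le)
    ⟨fun w hw => ball_subset_closedBall (hg hw).1, hhol⟩
  have hδη' : Real.sqrt δ ≤ η := Real.sqrt_le_left hη.le |>.2 hδη.le
  have hg0 : ‖g 0‖ ≤ η := max_le (hg1.le.trans hδη') (by nlinarith)
  obtain ⟨hfst, hsnd⟩ := hschwarz (hform i) hg h1 h2 hg0 ζ (mem_ball_zero_iff.2 hζ)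
  exact ⟨Real.lt_sqrt_of_sq_lt (by linarith), by linarith⟩

end

/-- **Uniform Schwarz-type lemma on nonisotropic polydiscs.** A `J_ν`-holomorphic disc
entering the nonisotropic polydisc `Q(0,δ) = {|z₁| < √δ, |z₂| < δ}` at its center stays
in `Q(0, C₀δ)` on a fixed smaller disc `r₀Δ`. -/
theorem statement12
    (C : ℝ) (hC : 0 < C)
    (rν : ℕ → ℂ × ℂ → ℝ)
    (hreg : ∀ ν, ContDiffOn ℝ 2 (rν ν) (closedBall (0 : ℂ × ℂ) 1))
    (hform : ∀ ν, ∀ z ∈ closedBall (0 : ℂ × ℂ) 1,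
      |rν ν z - (z.2.re + ‖z.1‖ ^ 2)| ≤ C * (‖z.2‖ * ‖z‖ + ‖z‖ ^ 3))
    (W : Set (ℂ × ℂ)) (hW : IsOpen W) (hBW : closedBall (0 : ℂ × ℂ) 1 ⊆ W)
    (J : ℂ × ℂ → (ℂ × ℂ) →L[ℝ] ℂ × ℂ) (Jν : ℕ → ℂ × ℂ → (ℂ × ℂ) →L[ℝ] ℂ × ℂ)
    (hJ : IsACS W J) (hJν : ∀ ν, IsACS W (Jν ν))
    (hsplit : ∀ z ∈ W, ∀ w : ℂ × ℂ, (J z (w.1, 0)).2 = 0 ∧ (J z (0, w.2)).1 = 0)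
    (hsplitν : ∀ ν, ∀ z ∈ W, ∀ w : ℂ × ℂ,
      (Jν ν z (w.1, 0)).2 = 0 ∧ (Jν ν z (0, w.2)).1 = 0)
    (hJ0 : J 0 = Jst (ℂ × ℂ))
    (hJlip : ∀ z ∈ closedBall (0 : ℂ × ℂ) 1, ‖J z - Jst (ℂ × ℂ)‖ ≤ C * ‖z‖)
    (hconv : Tendsto (fun ν => c2Dist (Jν ν) J (closedBall (0 : ℂ × ℂ) 1))
      atTop (𝓝 0)) :
    ∃ C₀ > 0, ∃ δ₀ > 0, ∃ r₀ > 0, ∃ ν₀ : ℕ, ∀ δ : ℝ, 0 < δ → δ < δ₀ → ∀ ν ≥ ν₀,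
      ∀ g : ℂ → ℂ × ℂ, IsJDisc (Jν ν) {z ∈ ball (0 : ℂ × ℂ) 1 | rν ν z < 0} g →
        ‖(g 0).1‖ < Real.sqrt δ → ‖(g 0).2‖ < δ →
        ∀ ζ : ℂ, ‖ζ‖ < r₀ →
          ‖(g ζ).1‖ < Real.sqrt (C₀ * δ) ∧ ‖(g ζ).2‖ < C₀ * δ := by
  obtain ⟨C₀, hC₀, δ₀, hδ₀, r₀, hr₀, hlim⟩ := statement12_general hC.le hform
    (hJ.smooth.continuousOn.mono hBW) (fun z hz => hJ.sq z (hBW hz))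
    (fun z hz => hsplit z (hBW hz)) (fun ν z hz => hsplitν ν z (hBW hz)) hJ0
    (tendstoUniformlyOn_of_tendsto_c2Dist hW (isCompact_closedBall _ _) hBW
      (fun ν => (hJν ν).smooth.of_le (WithTop.coe_le_coe.2 le_top))
      (hJ.smooth.of_le (WithTop.coe_le_coe.2 le_top)) hconv)
  obtain ⟨ν₀, hν₀⟩ := eventually_atTop.1 hlim
  exact ⟨C₀, hC₀, δ₀, hδ₀, r₀, hr₀, ν₀, fun δ hδ hδ' ν hν => hν₀ ν hν δ hδ hδ'⟩

end
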